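/- arXiv:1806.01877 — 3 statements merged into one kernel-verified Lean document; each statement's English description precedes it below -/
import Mathlib

section
/- Let F(x,ξ) = g_x(ξ,ξ)/ω_x(ξ) be a Kropina metric with ω closed; let ∇^g be the Levi-Civita connection of the pseudo-Riemannian metric g, and define the torsion-free affine connection ∇ with Christoffel symbols Γ_{ij}^k = (Γ^g)_{ij}^k + |ω|_g^{-2}(∇^g_i ω_j)ω^k. Then every geodesic of the Kropina metric F is, up to reparametrization, a geodesic of ∇. -/
open scoped BigOperators

/-- Partial derivative of `f` at `p` in the `k`-th coordinate direction. -/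
noncomputable def pd {n : ℕ} (f : (Fin n → ℝ) → ℝ) (p : Fin n → ℝ) (k : Fin n) : ℝ :=
  fderiv ℝ f p (Pi.single k 1)

/-- `ω(ξ)`, the denominator of the Kropina metric. -/
noncomputable def Fden {n : ℕ} (ω : Fin n → (Fin n → ℝ) → ℝ) (p ξ : Fin n → ℝ) : ℝ :=
  ∑ l, ω l p * ξ l

/-- `g(ξ,ξ)`, the numerator of the Kropina metric. -/
noncomputable def Fnum {n : ℕ} (g : Fin n → Fin n → (Fin n → ℝ) → ℝ) (p ξ : Fin n → ℝ) : ℝ :=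
  ∑ i, ∑ j, g i j p * ξ i * ξ j

/-- `∂F/∂x^k` for the Kropina Lagrangian `F = g(ξ,ξ)/ω(ξ)`. -/
noncomputable def Fx {n : ℕ} (g : Fin n → Fin n → (Fin n → ℝ) → ℝ)
    (ω : Fin n → (Fin n → ℝ) → ℝ) (k : Fin n) (p ξ : Fin n → ℝ) : ℝ :=
  (Fden ω p ξ)⁻¹ * (∑ i, ∑ j, pd (g i j) p k * ξ i * ξ j)
    - ((Fden ω p ξ)⁻¹) ^ 2 * (∑ l, pd (ω l) p k * ξ l) * Fnum g p ξ

/-- `∂F/∂ξ^k` for the Kropina Lagrangian `F = g(ξ,ξ)/ω(ξ)`. -/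
noncomputable def Fxi {n : ℕ} (g : Fin n → Fin n → (Fin n → ℝ) → ℝ)
    (ω : Fin n → (Fin n → ℝ) → ℝ) (k : Fin n) (p ξ : Fin n → ℝ) : ℝ :=
  2 * (Fden ω p ξ)⁻¹ * (∑ j, g k j p * ξ j)
    - ((Fden ω p ξ)⁻¹) ^ 2 * ω k p * Fnum g p ξ

/-- A curve `x` is a (Kropina) geodesic of `F = g/ω` on `s` if `ω(x') ≠ 0` there and
the Euler–Lagrange equations `d/dt (∂F/∂ξ^k) = ∂F/∂x^k` hold. -/
def IsKropinaGeodesicOn {n : ℕ} (g : Fin n → Fin n → (Fin n → ℝ) → ℝ)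
    (ω : Fin n → (Fin n → ℝ) → ℝ) (x : ℝ → Fin n → ℝ) (s : Set ℝ) : Prop :=
  ∀ t ∈ s, Fden ω (x t) (deriv x t) ≠ 0 ∧
    ∀ k, HasDerivAt (fun u => Fxi g ω k (x u) (deriv x u))
      (Fx g ω k (x t) (deriv x t)) t

/-- Christoffel symbols `Γ_{ij}^k` of the metric `g` (`ginv` its inverse). -/
noncomputable def Christoffel {n : ℕ} (g ginv : Fin n → Fin n → (Fin n → ℝ) → ℝ)
    (i j k : Fin n) (p : Fin n → ℝ) : ℝ :=
  (1 / 2) * ∑ l, ginv k l p * (pd (g j l) p i + pd (g i l) p j - pd (g i j) p l)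


lemma kr_alg {n : ℕ} (g gi : Fin n → Fin n → ℝ) (dg : Fin n → Fin n → Fin n → ℝ)
    (w : Fin n → ℝ) (dw : Fin n → Fin n → ℝ) (v a : Fin n → ℝ) (h h' ρ ρ' N : ℝ)
    (hdg : ∀ i j k, dg i j k = dg j i k)
    (hgi : ∀ i j, (∑ l, g i l * gi l j) = if i = j then (1 : ℝ) else 0)
    (hcl : ∀ i j, dw j i = dw i j)
    (hN : N = ∑ k, ∑ l, gi k l * w k * w l) (hN0 : N ≠ 0)
    (hh : h = ∑ l, w l * v l) (hh0 : h ≠ 0)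
    (hh' : h' = ∑ l, ((∑ m, dw l m * v m) * v l + w l * a l))
    (hEL : ∀ k, 2 * (-h' / h ^ 2) * (∑ j, g k j * v j)
      + 2 * h⁻¹ * (∑ j, ((∑ m, dg k j m * v m) * v j + g k j * a j))
      - (ρ' * w k + ρ * ∑ m, dw k m * v m)
      = h⁻¹ * (∑ i, ∑ j, dg i j k * v i * v j) - ρ * (∑ l, dw l k * v l))
    (C : Fin n → Fin n → Fin n → ℝ)
    (hC : ∀ i j k, C i j k = (1 / 2) * ∑ l, gi k l * (dg j l i + dg i l j - dg i j l)) (k : Fin n) :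
    a k + ∑ i, ∑ j, (C i j k + N⁻¹ * (dw j i - ∑ l, C i j l * w l) * (∑ l, gi k l * w l))
      * v i * v j = h' / h * v k := by
  have hgi2 : ∀ i j, (∑ l, gi i l * g l j) = if i = j then (1 : ℝ) else 0 := by
    have h1 : (Matrix.of g) * (Matrix.of gi) = 1 := by
      ext i j; simp [Matrix.mul_apply, hgi, Matrix.one_apply]
    have h2 := mul_eq_one_comm.mp h1
    intro i j
    have := congrFun (congrFun h2 i) j
    simpa [Matrix.mul_apply, Matrix.one_apply] using this
  set P : Fin n → ℝ := fun l => (∑ j, (∑ m, dg l j m * v m) * v j)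
    - (1/2) * ∑ i, ∑ j, dg i j l * v i * v j with hP
  have hsw : ∀ l, ∑ i, ∑ j, dg j l i * v i * v j = ∑ j, (∑ m, dg l j m * v m) * v j := by
    intro l
    rw [Finset.sum_comm]
    refine Finset.sum_congr rfl fun j _ => ?_
    rw [Finset.sum_mul]
    exact Finset.sum_congr rfl fun m _ => by rw [hdg]
  have hsw2 : ∀ l, ∑ i, ∑ j, dg i l j * v i * v j = ∑ j, (∑ m, dg l j m * v m) * v j := by
    intro l
    refine Finset.sum_congr rfl fun j _ => ?_
    rw [Finset.sum_mul]
    exact Finset.sum_congr rfl fun m _ => by rw [hdg]; ring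
  have hCv : ∀ k, ∑ i, ∑ j, C i j k * v i * v j = ∑ l, gi k l * P l := by
    intro k
    have e1 : ∀ l, gi k l * P l = ∑ i, ∑ j,
        (1/2) * (gi k l * (dg j l i + dg i l j - dg i j l)) * v i * v j := by
      intro l
      have : P l = (1/2) * (∑ i, ∑ j, dg j l i * v i * v j) + (1/2) * (∑ i, ∑ j, dg i l j * v i * v j)
        - (1/2) * ∑ i, ∑ j, dg i j l * v i * v j := by rw [hsw, hsw2, hP]; ring
      rw [this]
      simp only [Finset.mul_sum, ← Finset.sum_add_distrib, ← Finset.sum_sub_distrib]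
      exact Finset.sum_congr rfl fun i _ => Finset.sum_congr rfl fun j _ => by ring
    simp only [e1]
    symm
    rw [Finset.sum_comm]
    refine Finset.sum_congr rfl fun i _ => ?_
    rw [Finset.sum_comm]
    refine Finset.sum_congr rfl fun j _ => ?_
    rw [hC, Finset.mul_sum, Finset.sum_mul, Finset.sum_mul]
  set μ := h / 2 * ρ' with hμ
  have key : ∀ l, P l + ∑ j, g l j * a j = h' / h * (∑ j, g l j * v j) + μ * w l := by
    intro l
    have := hEL l
    have e : ∑ m, dw l m * v m = ∑ m, dw m l * v m :=
      Finset.sum_congr rfl fun m _ => by rw [hcl]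
    rw [e, Finset.sum_add_distrib] at this
    simp only [hP, hμ]
    field_simp at this ⊢
    linarith
  have hinv : ∀ (b : Fin n → ℝ) k, ∑ l, gi k l * (∑ j, g l j * b j) = b k := by
    intro b k
    simp only [Finset.mul_sum]
    rw [Finset.sum_comm]
    have : ∀ j, ∑ l, gi k l * (g l j * b j) = (if k = j then 1 else 0) * b j := by
      intro j; rw [← hgi2, Finset.sum_mul]; exact Finset.sum_congr rfl fun l _ => by ring
    simp [this]
  set Q : Fin n → ℝ := fun k => ∑ l, gi k l * P l with hQ
  set W : Fin n → ℝ := fun k => ∑ l, gi k l * w l with hW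
  have key2 : ∀ k, Q k + a k = h' / h * v k + μ * W k := by
    intro k
    have : ∑ l, gi k l * (P l + ∑ j, g l j * a j)
      = ∑ l, gi k l * (h' / h * (∑ j, g l j * v j) + μ * w l) :=
      Finset.sum_congr rfl fun l _ => by rw [key]
    simp only [mul_add, Finset.sum_add_distrib] at this
    rw [hinv] at this
    rw [hQ, hW]
    simp only
    rw [this, Finset.mul_sum, ← hinv v k, Finset.mul_sum]
    congr 1
    · exact Finset.sum_congr rfl fun l _ => by ring
    · exact Finset.sum_congr rfl fun l _ => by ring
  have hNW : ∑ k, w k * W k = N := by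
    rw [hN]
    refine Finset.sum_congr rfl fun k _ => ?_
    rw [hW]; simp only; rw [Finset.mul_sum]
    exact Finset.sum_congr rfl fun l _ => by ring
  clear_value W Q
  have key3 : ∑ k, w k * Q k + ∑ k, w k * a k = h' + μ * N := by
    rw [← Finset.sum_add_distrib]
    have : ∀ k, w k * Q k + w k * a k = h' / h * (w k * v k) + μ * (w k * W k) := by
      intro k; rw [← mul_add, key2]; ring
    simp only [this]
    rw [Finset.sum_add_distrib, ← Finset.mul_sum, ← Finset.mul_sum, hNW, ← hh]
    field_simp
  rw [Finset.sum_add_distrib] at hh'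
  set D := ∑ l, (∑ m, dw l m * v m) * v l with hD
  have hmu : μ * N = ∑ k, w k * Q k - D := by linarith
  have hfin : ∑ i, ∑ j, (C i j k + N⁻¹ * (dw j i - ∑ l, C i j l * w l) * W k) * v i * v j
      = Q k + N⁻¹ * (D - ∑ k, w k * Q k) * W k := by
    have e1 : ∑ k, w k * Q k = ∑ i, ∑ j, (∑ l, C i j l * w l) * v i * v j := by
      have : ∀ l, w l * Q l = ∑ i, ∑ j, C i j l * w l * v i * v j := by
        intro l
        rw [hQ]; simp only; rw [← hCv, Finset.mul_sum]
        refine Finset.sum_congr rfl fun i _ => ?_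
        rw [Finset.mul_sum]
        exact Finset.sum_congr rfl fun l _ => by ring
      simp only [this]
      rw [Finset.sum_comm]
      refine Finset.sum_congr rfl fun i _ => ?_
      rw [Finset.sum_comm]
      refine Finset.sum_congr rfl fun j _ => ?_
      rw [Finset.sum_mul, Finset.sum_mul]
    have e2 : D = ∑ i, ∑ j, dw j i * v i * v j := by
      rw [hD, Finset.sum_comm]
      exact Finset.sum_congr rfl fun l _ => by rw [Finset.sum_mul]
    have e3 : Q k = ∑ i, ∑ j, C i j k * v i * v j := by rw [hCv, hQ]
    rw [e1, e2, e3, ← Finset.sum_sub_distrib, Finset.mul_sum, Finset.sum_mul, ← Finset.sum_add_distrib]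
    refine Finset.sum_congr rfl fun i _ => ?_
    rw [← Finset.sum_sub_distrib, Finset.mul_sum, Finset.sum_mul, ← Finset.sum_add_distrib]
    exact Finset.sum_congr rfl fun j _ => by ring
  have hWk : ∑ l, gi k l * w l = W k := by rw [hW]
  rw [hWk, hfin]
  have : N⁻¹ * (D - ∑ k, w k * Q k) = -μ := by
    field_simp; linarith
  rw [this]
  linarith [key2 k]

lemma kr_comp {n : ℕ} (f : (Fin n → ℝ) → ℝ) (hf : ContDiff ℝ (⊤ : ℕ∞) f) (γ : ℝ → Fin n → ℝ)
    (t : ℝ) (v : Fin n → ℝ) (hγ : HasDerivAt γ v t) :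
    HasDerivAt (fun u => f (γ u)) (∑ m, pd f (γ t) m * v m) t := by
  have h1 : HasFDerivAt f (fderiv ℝ f (γ t)) (γ t) :=
    (hf.differentiable (by simp) (γ t)).hasFDerivAt
  have h2 := h1.comp_hasDerivAt t hγ
  have h3 : (fderiv ℝ f (γ t)) v = ∑ m, pd f (γ t) m * v m := by
    conv_lhs => rw [pi_eq_sum_univ' v, map_sum]
    refine Finset.sum_congr rfl fun m _ => ?_
    rw [map_smul, smul_eq_mul, mul_comm, pd]
  rw [h3] at h2
  exact h2

lemma kr_geo {n : ℕ}
    (g ginv : Fin n → Fin n → (Fin n → ℝ) → ℝ) (ω : Fin n → (Fin n → ℝ) → ℝ)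
    (hgsymm : ∀ i j, g i j = g j i)
    (hginv : ∀ p i j, (∑ l, g i l p * ginv l j p) = if i = j then (1 : ℝ) else 0)
    (hgsm : ∀ i j, ContDiff ℝ (⊤ : ℕ∞) (g i j)) (hωsm : ∀ i, ContDiff ℝ (⊤ : ℕ∞) (ω i))
    (hclosed : ∀ p i j, pd (ω j) p i = pd (ω i) p j)
    (hnorm : ∀ p, (∑ k, ∑ l, ginv k l p * ω k p * ω l p) ≠ 0)
    (Γ : Fin n → Fin n → Fin n → (Fin n → ℝ) → ℝ)
    (hΓ : ∀ i j k p, Γ i j k p = Christoffel g ginv i j k p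
      + (∑ a, ∑ b, ginv a b p * ω a p * ω b p)⁻¹
        * (pd (ω j) p i - ∑ l, Christoffel g ginv i j l p * ω l p)
        * (∑ l, ginv k l p * ω l p))
    (γ : ℝ → Fin n → ℝ) (s : Set ℝ)
    (hgeo : IsKropinaGeodesicOn g ω γ s) (t : ℝ) (ht : t ∈ s)
    (a : Fin n → ℝ) (hv : HasDerivAt γ (deriv γ t) t) (ha : HasDerivAt (deriv γ) a t) (k : Fin n) :
    a k + ∑ i, ∑ j, Γ i j k (γ t) * deriv γ t i * deriv γ t j
      = deriv (fun u => Fden ω (γ u) (deriv γ u)) t / Fden ω (γ t) (deriv γ t) * deriv γ t k := by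
  obtain ⟨h0, hE⟩ := hgeo t ht
  set v := deriv γ t with hvdef
  have hai : ∀ i, HasDerivAt (fun u => deriv γ u i) (a i) t := fun i => (hasDerivAt_pi.mp ha) i
  have hh : HasDerivAt (fun u => Fden ω (γ u) (deriv γ u))
      (∑ l, ((∑ m, pd (ω l) (γ t) m * v m) * v l + ω l (γ t) * a l)) t := by
    unfold Fden
    exact HasDerivAt.fun_sum fun l _ => (kr_comp (ω l) (hωsm l) γ t v hv).mul (hai l)
  have hG : ∃ G', HasDerivAt (fun u => Fnum g (γ u) (deriv γ u)) G' t := by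
    unfold Fnum
    exact ⟨_, HasDerivAt.fun_sum fun i _ => HasDerivAt.fun_sum fun j _ =>
      ((kr_comp (g i j) (hgsm i j) γ t v hv).mul (hai i)).mul (hai j)⟩
  obtain ⟨G', hG⟩ := hG
  have hgk : ∀ k, HasDerivAt (fun u => ∑ j, g k j (γ u) * deriv γ u j)
      (∑ j, ((∑ m, pd (g k j) (γ t) m * v m) * v j + g k j (γ t) * a j)) t := fun k =>
    HasDerivAt.fun_sum fun j _ => (kr_comp (g k j) (hgsm k j) γ t v hv).mul (hai j)
  have hi := hh.fun_inv h0
  obtain ⟨ρ', hρ⟩ : ∃ ρ', HasDerivAt (fun u => ((Fden ω (γ u) (deriv γ u))⁻¹) ^ 2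
      * Fnum g (γ u) (deriv γ u)) ρ' t := ⟨_, (hi.fun_pow 2).fun_mul hG⟩
  rw [hh.deriv]
  simp only [hΓ]
  refine kr_alg (fun i j => g i j (γ t)) (fun i j => ginv i j (γ t)) (fun i j k => pd (g i j) (γ t) k)
    (fun i => ω i (γ t)) (fun i j => pd (ω i) (γ t) j) v a (Fden ω (γ t) v) _
    (((Fden ω (γ t) v)⁻¹) ^ 2 * Fnum g (γ t) v) ρ' _ ?_ (hginv (γ t)) ?_ rfl (hnorm _) rfl h0 rfl
    (fun k => ?_) (fun i j k => Christoffel g ginv i j k (γ t)) (fun i j k => rfl) k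
  · intro i j k; simp only [hgsymm i j]
  · intro i j; exact hclosed _ _ _
  · have h1 := ((hi.const_mul 2).fun_mul (hgk k)).fun_sub
      (hρ.fun_mul (kr_comp (ω k) (hωsm k) γ t v hv))
    have h2 := hE k
    have h3 := h1.unique (h2.congr_of_eventuallyEq (Filter.Eventually.of_forall fun u => by
      simp only [Fxi]; ring))
    simp only [Fx] at h3
    refine (Eq.trans ?_ h3).trans ?_
    · rfl
    · ring

lemma kr_loc (h : ℝ → ℝ) (s : Set ℝ) (hs : IsOpen s) (hsm : ContDiffOn ℝ (⊤ : ℕ∞) h s)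
    (h0 : ∀ t ∈ s, h t ≠ 0) (t0 : ℝ) (ht0 : t0 ∈ s) :
    ∃ (f : ℝ → ℝ) (δ : ℝ), 0 < δ ∧ δ < 1 / 4 ∧ ContDiff ℝ (⊤ : ℕ∞) f ∧
      (∀ u, 1 / 4 ≤ |u| → f u = 0) ∧
      (∀ u ∈ Metric.ball 0 δ, f u ∈ s ∧ 0 < deriv f u ∧ h (f u) * deriv f u = h t0) ∧
      f '' Metric.ball 0 δ ∈ nhds t0 := by
  have hc0 : h t0 ≠ 0 := h0 t0 ht0
  have hcont : ContinuousAt (fun u => h u / h t0) t0 :=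
    ((hsm.continuousOn.continuousAt (hs.mem_nhds ht0))).div_const _
  have hev : ∀ᶠ u in nhds t0, 0 < h u / h t0 ∧ u ∈ s := by
    refine (hcont.eventually (lt_mem_nhds ?_)).and (hs.mem_nhds ht0)
    simp [div_self hc0]
  obtain ⟨r, hr, hrs⟩ := Metric.eventually_nhds_iff_ball.mp hev
  let χ : ContDiffBump t0 := ⟨r / 3, r / 2, by linarith, by linarith⟩
  let H : ℝ → ℝ := fun u => χ u * (h u / h t0)
  have hH : ContDiff ℝ (⊤ : ℕ∞) H := by
    rw [contDiff_iff_contDiffAt]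
    intro u
    by_cases hu : u ∈ Metric.ball t0 r
    · exact χ.contDiffAt.mul
        ((hsm.contDiffAt (hs.mem_nhds (hrs u hu).2)).div_const _)
    · have : H =ᶠ[nhds u] fun _ => 0 := by
        have hu' : u ∈ (Metric.closedBall t0 (r / 2))ᶜ := by
          simp only [Metric.mem_ball, not_lt, Set.mem_compl_iff, Metric.mem_closedBall, not_le] at hu ⊢
          linarith
        filter_upwards [Metric.isClosed_closedBall.isOpen_compl.mem_nhds hu'] with y hy
        have : χ y = 0 := χ.zero_of_le_dist (by
          simp only [Set.mem_compl_iff, Metric.mem_closedBall, not_le] at hy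
          exact hy.le)
        simp [H, this]
      exact contDiffAt_const.congr_of_eventuallyEq this
  have hH1 : ∀ u ∈ Metric.ball t0 (r / 3), H u = h u / h t0 := by
    intro u hu
    have : χ u = 1 := χ.one_of_mem_closedBall (Metric.ball_subset_closedBall hu)
    simp [H, this]
  let T : ℝ → ℝ := fun u => ∫ x in t0..u, H x
  have hT : ∀ u, HasDerivAt T (H u) u := fun u =>
    intervalIntegral.integral_hasDerivAt_right (hH.continuous.intervalIntegrable _ _)
      (hH.continuous.stronglyMeasurableAtFilter _ _) hH.continuous.continuousAt
  have hTsm : ContDiff ℝ (⊤ : ℕ∞) T := by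
    rw [contDiff_infty_iff_deriv]
    refine ⟨fun u => (hT u).differentiableAt, ?_⟩
    rwa [show deriv T = H from funext fun u => (hT u).deriv]
  have hT0 : T t0 = 0 := by simp [T]
  have hHt0 : H t0 = 1 := by
    rw [hH1 t0 (Metric.mem_ball_self (by linarith)), div_self hc0]
  have hne : H t0 ≠ 0 := by rw [hHt0]; norm_num
  let e : OpenPartialHomeomorph ℝ ℝ := (hTsm.contDiffAt (x := t0)).toOpenPartialHomeomorph T
    ((hT t0).hasFDerivAt_equiv hne) (by simp)
  have hecoe : (e : ℝ → ℝ) = T := rfl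
  have hes : t0 ∈ e.source := (hTsm.contDiffAt (x := t0)).mem_toOpenPartialHomeomorph_source
    ((hT t0).hasFDerivAt_equiv hne) (by simp)
  have het : (0 : ℝ) ∈ e.target := by
    have := e.map_source hes
    rwa [hecoe, hT0] at this
  have hes0 : e.symm 0 = t0 := by
    have := e.left_inv hes
    rwa [hecoe, hT0] at this
  have hev2 : ∀ᶠ u in nhds (0 : ℝ), u ∈ e.target ∧ e.symm u ∈ Metric.ball t0 (r / 3) := by
    refine (e.open_target.mem_nhds het |> Filter.Eventually.and <| ?_)
    have := e.symm.continuousAt (x := 0) het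
    refine this.eventually (Metric.isOpen_ball.mem_nhds ?_)
    rw [hes0]
    exact Metric.mem_ball_self (by linarith)
  obtain ⟨d, hd, hds⟩ := Metric.eventually_nhds_iff_ball.mp hev2
  obtain ⟨δ, hδ, hδd, hδ4⟩ : ∃ δ : ℝ, 0 < δ ∧ 4 * δ ≤ d ∧ 4 * δ ≤ 1 / 4 := by
    refine ⟨min d (1/4) / 4, by positivity, ?_, ?_⟩
    · linarith [min_le_left d (1/4)]
    · linarith [min_le_right d (1/4)]
  have hpos : ∀ u ∈ Metric.ball 0 d, 0 < H (e.symm u) ∧ H (e.symm u) = h (e.symm u) / h t0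
      ∧ e.symm u ∈ s := by
    intro u hu
    have h1 := hH1 _ (hds u hu).2
    have h2 := hrs (e.symm u) (Metric.ball_subset_ball (by linarith) (hds u hu).2)
    exact ⟨by rw [h1]; exact h2.1, h1, h2.2⟩
  have hsymsm : ∀ u ∈ Metric.ball 0 d, ContDiffAt ℝ (⊤ : ℕ∞) e.symm u := fun u hu =>
    e.contDiffAt_symm_deriv (hpos u hu).1.ne' (hds u hu).1 (hT _) hTsm.contDiffAt
  have hsymd : ∀ u ∈ Metric.ball 0 d, HasDerivAt e.symm (H (e.symm u))⁻¹ u := fun u hu =>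
    e.hasDerivAt_symm (hds u hu).1 (hpos u hu).1.ne' (hT _)
  let ψ : ContDiffBump (0 : ℝ) := ⟨δ, 2 * δ, hδ, by linarith⟩
  let f : ℝ → ℝ := fun u => ψ u * e.symm u
  have hfe : ∀ u ∈ Metric.ball 0 δ, f =ᶠ[nhds u] e.symm := by
    intro u hu
    filter_upwards [ψ.eventuallyEq_one_of_mem_ball hu] with y hy
    simp [f, hy]
  have hf0 : ∀ u, 2 * δ ≤ |u| → f u = 0 := by
    intro u hu
    have : ψ u = 0 := ψ.zero_of_le_dist (by simpa using hu)
    simp [f, this]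
  have hsub : Metric.ball (0 : ℝ) δ ⊆ Metric.ball 0 d := Metric.ball_subset_ball (by linarith)
  refine ⟨f, δ, hδ, by linarith, ?_, fun u hu => hf0 u (by linarith), ?_, ?_⟩
  · rw [contDiff_iff_contDiffAt]
    intro u
    by_cases hu : u ∈ Metric.ball 0 d
    · exact ψ.contDiffAt.mul (hsymsm u hu)
    · have : f =ᶠ[nhds u] fun _ => 0 := by
        have hu' : 2 * δ < |u| := by
          simp only [Metric.mem_ball, not_lt, dist_zero_right, Real.norm_eq_abs] at hu
          linarith
        filter_upwards [continuous_abs.continuousAt.eventually (lt_mem_nhds hu')] with y hy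
        exact hf0 y hy.le
      exact contDiffAt_const.congr_of_eventuallyEq this
  · intro u hu
    have h1 := hpos u (hsub hu)
    rw [(hfe u hu).eq_of_nhds, (hfe u hu).deriv_eq, (hsymd u (hsub hu)).deriv]
    refine ⟨h1.2.2, inv_pos.mpr h1.1, ?_⟩
    have h2 := h0 _ h1.2.2
    rw [h1.2.1]
    field_simp
  · have h1 : e.source ∩ T ⁻¹' Metric.ball 0 δ ∈ nhds t0 := by
      refine Filter.inter_mem (e.open_source.mem_nhds hes) (hTsm.continuous.continuousAt ?_)
      rw [hT0]
      exact Metric.ball_mem_nhds _ hδ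
    refine Filter.mem_of_superset h1 ?_
    rintro y ⟨hy1, hy2⟩
    refine ⟨T y, hy2, ?_⟩
    rw [(hfe _ hy2).eq_of_nhds]
    exact e.left_inv hy1

lemma kr_glue (h : ℝ → ℝ) (s : Set ℝ) (hs : IsOpen s) (hsm : ContDiffOn ℝ (⊤ : ℕ∞) h s)
    (h0 : ∀ t ∈ s, h t ≠ 0) :
    ∃ (s' : Set ℝ) (φ : ℝ → ℝ), IsOpen s' ∧ ContDiff ℝ (⊤ : ℕ∞) φ ∧
      (∀ t ∈ s', 0 < deriv φ t) ∧ φ '' s' = s ∧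
      ∀ t ∈ s', ∃ c : ℝ, ∀ᶠ u in nhds t, h (φ u) * deriv φ u = c := by
  rcases s.eq_empty_or_nonempty with rfl | hne
  · exact ⟨∅, id, isOpen_empty, contDiff_id, by simp, by simp, by simp⟩
  choose! f δ hδ hδ4 hf hf0 hfu him using fun t ht => kr_loc h s hs hsm h0 t ht
  obtain ⟨D, hDs, hDc, hD⟩ := TopologicalSpace.countable_cover_nhdsWithin
    (f := fun t => f t '' Metric.ball 0 (δ t)) (s := s)
    (fun t ht => mem_nhdsWithin_of_mem_nhds (him t ht))
  have hDne : D.Nonempty := by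
    obtain ⟨x, hx⟩ := hne
    obtain ⟨i, hi, -⟩ := Set.mem_iUnion₂.mp (hD hx)
    exact ⟨i, hi⟩
  obtain ⟨q, rfl⟩ := hDc.exists_eq_range hDne
  have hq : ∀ m, q m ∈ s := fun m => hDs ⟨m, rfl⟩
  let F : ℤ → ℝ → ℝ := fun m => f (q m.toNat)
  let d : ℤ → ℝ := fun m => δ (q m.toNat)
  let Φ : ℝ → ℝ := fun t => F (round t) (t - round t)
  have hΦ : ∀ (m : ℤ) (t : ℝ), |t - m| < 1 / 2 → Φ =ᶠ[nhds t] fun u => F m (u - m) := by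
    intro m t ht
    have : ∀ᶠ u in nhds t, |u - (m : ℝ)| < 1 / 2 := by
      have hc : Continuous fun u : ℝ => |u - (m : ℝ)| := by fun_prop
      exact hc.continuousAt.eventually (gt_mem_nhds ht)
    filter_upwards [this] with u hu
    have : round u = m := by
      rw [round_eq, Int.floor_eq_iff]
      rw [abs_lt] at hu
      constructor <;> linarith
    simp only [Φ, this]
  have hΦd : ∀ (m : ℤ) (t : ℝ), |t - m| < 1 / 2 → deriv Φ t = deriv (F m) (t - m) := by
    intro m t ht
    rw [(hΦ m t ht).deriv_eq, deriv_comp_sub_const]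
  have hball : ∀ (m : ℤ) (t : ℝ), t ∈ Metric.ball (m : ℝ) (d m) → |t - m| < 1 / 2 ∧
      t - m ∈ Metric.ball (0 : ℝ) (d m) := by
    intro m t ht
    rw [Metric.mem_ball, Real.dist_eq] at ht
    have := hδ4 _ (hq m.toNat)
    refine ⟨?_, by simpa using ht⟩
    simp only [d] at ht
    linarith
  refine ⟨⋃ m : ℤ, Metric.ball (m : ℝ) (d m), Φ, isOpen_iUnion fun m => Metric.isOpen_ball,
    ?_, ?_, ?_, ?_⟩
  · rw [contDiff_iff_contDiffAt]
    intro t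
    by_cases ht : |t - round t| < 1 / 2
    · refine ContDiffAt.congr_of_eventuallyEq ?_ (hΦ _ _ ht)
      exact ((hf _ (hq _)).comp (contDiff_id.sub contDiff_const)).contDiffAt
    · have ht2 := abs_sub_round t
      have ht3 : |t - round t| = 1 / 2 := le_antisymm ht2 (not_lt.mp ht)
      have : Φ =ᶠ[nhds t] fun _ => 0 := by
        filter_upwards [Metric.ball_mem_nhds t (show (0 : ℝ) < 1 / 4 by norm_num)] with u hu
        refine hf0 _ (hq _) _ ?_
        rw [Metric.mem_ball, Real.dist_eq] at hu
        have h1 := round_le t (round u)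
        have h2 : |t - round u| ≤ |u - round u| + |u - t| := by
          have := abs_sub_le t u (round u : ℝ)
          rw [abs_sub_comm t u] at this
          linarith
        linarith
      exact contDiffAt_const.congr_of_eventuallyEq this
  · intro t ht
    obtain ⟨m, hm⟩ := Set.mem_iUnion.mp ht
    obtain ⟨h1, h2⟩ := hball m t hm
    rw [hΦd m t h1]
    exact (hfu _ (hq _) _ h2).2.1
  · ext y
    constructor
    · rintro ⟨t, ht, rfl⟩
      obtain ⟨m, hm⟩ := Set.mem_iUnion.mp ht
      obtain ⟨h1, h2⟩ := hball m t hm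
      rw [(hΦ m t h1).eq_of_nhds]
      exact (hfu _ (hq _) _ h2).1
    · intro hy
      obtain ⟨_, ⟨m, rfl⟩, hi⟩ := Set.mem_iUnion₂.mp (hD hy)
      obtain ⟨u, hu, rfl⟩ := hi
      have hu' : u + m ∈ Metric.ball ((m : ℤ) : ℝ) (d m) := by
        simpa [d, Metric.mem_ball, Real.dist_eq] using hu
      refine ⟨u + m, Set.mem_iUnion.mpr ⟨(m : ℤ), hu'⟩, ?_⟩
      rw [(hΦ m _ (hball m _ hu').1).eq_of_nhds]
      simp [F]
  · intro t ht
    obtain ⟨m, hm⟩ := Set.mem_iUnion.mp ht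
    refine ⟨h (q m.toNat), ?_⟩
    filter_upwards [Metric.isOpen_ball.mem_nhds hm] with u hu
    obtain ⟨h1, h2⟩ := hball m u hu
    rw [hΦd m u h1, (hΦ m u h1).eq_of_nhds]
    exact (hfu _ (hq _) _ h2).2.2

/-- If `ω` is closed, every geodesic of the Kropina metric `F = g/ω` is, up to an
orientation-preserving reparametrization, a geodesic of the affine connection
`Γ_{ij}^k = (Γ^g)_{ij}^k + |ω|_g⁻²(∇^g_i ω_j)ω^k`. -/
theorem stmt7 {n : ℕ}
    (g ginv : Fin n → Fin n → (Fin n → ℝ) → ℝ) (ω : Fin n → (Fin n → ℝ) → ℝ)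
    (hgsymm : ∀ i j, g i j = g j i)
    (hginv : ∀ p i j, (∑ l, g i l p * ginv l j p) = if i = j then (1 : ℝ) else 0)
    (hgsm : ∀ i j, ContDiff ℝ (⊤ : ℕ∞) (g i j)) (hωsm : ∀ i, ContDiff ℝ (⊤ : ℕ∞) (ω i))
    (hclosed : ∀ p i j, pd (ω j) p i = pd (ω i) p j)
    (hnorm : ∀ p, (∑ k, ∑ l, ginv k l p * ω k p * ω l p) ≠ 0)
    (Γ : Fin n → Fin n → Fin n → (Fin n → ℝ) → ℝ)
    (hΓ : ∀ i j k p, Γ i j k p = Christoffel g ginv i j k p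
      + (∑ a, ∑ b, ginv a b p * ω a p * ω b p)⁻¹
        * (pd (ω j) p i - ∑ l, Christoffel g ginv i j l p * ω l p)
        * (∑ l, ginv k l p * ω l p))
    (γ : ℝ → Fin n → ℝ) (s : Set ℝ) (hs : IsOpen s) (hγ : ContDiffOn ℝ (⊤ : ℕ∞) γ s)
    (hgeo : IsKropinaGeodesicOn g ω γ s) :
    ∃ (s' : Set ℝ) (φ : ℝ → ℝ), IsOpen s' ∧ ContDiff ℝ (⊤ : ℕ∞) φ ∧
      (∀ t ∈ s', 0 < deriv φ t) ∧ φ '' s' = s ∧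
      ∀ t ∈ s', ∀ k,
        deriv (fun u => deriv (fun v => γ (φ v) k) u) t
          + ∑ i, ∑ j, Γ i j k (γ (φ t))
              * deriv (fun v => γ (φ v) i) t * deriv (fun v => γ (φ v) j) t = 0 := by
  have hγ1 : ∀ t ∈ s, HasDerivAt γ (deriv γ t) t := fun t ht =>
    ((hγ.contDiffAt (hs.mem_nhds ht)).differentiableAt (by simp)).hasDerivAt
  have hγ'sm : ContDiffOn ℝ (⊤ : ℕ∞) (deriv γ) s :=
    ((contDiffOn_infty_iff_deriv_of_isOpen hs).mp hγ).2
  have hγ2 : ∀ t ∈ s, HasDerivAt (deriv γ) (deriv (deriv γ) t) t := fun t ht =>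
    ((hγ'sm.contDiffAt (hs.mem_nhds ht)).differentiableAt (by simp)).hasDerivAt
  let h : ℝ → ℝ := fun u => Fden ω (γ u) (deriv γ u)
  have hh : ContDiffOn ℝ (⊤ : ℕ∞) h s := by
    simp only [h, Fden]
    refine ContDiffOn.sum fun l _ => ?_
    exact ((hωsm l).comp_contDiffOn hγ).mul (contDiffOn_pi.mp hγ'sm l)
  obtain ⟨s', φ, hs', hφ, hφpos, him, hc⟩ := kr_glue h s hs hh (fun t ht => (hgeo t ht).1)
  refine ⟨s', φ, hs', hφ, hφpos, him, ?_⟩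
  intro t ht k
  have hmem : ∀ u ∈ s', φ u ∈ s := fun u hu => him ▸ Set.mem_image_of_mem φ hu
  have hφ1 : ∀ u, HasDerivAt φ (deriv φ u) u := fun u =>
    (hφ.differentiable (by simp) u).hasDerivAt
  have hφ2 : HasDerivAt (deriv φ) (deriv (deriv φ) t) t :=
    ((contDiff_infty_iff_deriv.mp hφ).2.differentiable (by simp) t).hasDerivAt
  have hd1 : ∀ i, ∀ u ∈ s', deriv (fun v => γ (φ v) i) u = deriv γ (φ u) i * deriv φ u := by
    intro i u hu
    exact (((hasDerivAt_pi.mp (hγ1 _ (hmem u hu))) i).comp u (hφ1 u)).deriv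
  have hd2 : deriv (fun u => deriv (fun v => γ (φ v) k) u) t
      = deriv (deriv γ) (φ t) k * deriv φ t * deriv φ t + deriv γ (φ t) k * deriv (deriv φ) t := by
    have hev : (fun u => deriv (fun v => γ (φ v) k) u) =ᶠ[nhds t]
        fun u => deriv γ (φ u) k * deriv φ u := by
      filter_upwards [hs'.mem_nhds ht] with u hu using hd1 k u hu
    rw [hev.deriv_eq]
    exact ((((hasDerivAt_pi.mp (hγ2 _ (hmem t ht))) k).comp t (hφ1 t)).mul hφ2).deriv
  have hhd : HasDerivAt h (deriv h (φ t)) (φ t) :=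
    ((hh.contDiffAt (hs.mem_nhds (hmem t ht))).differentiableAt (by simp)).hasDerivAt
  obtain ⟨c, hc⟩ := hc t ht
  have hrel : deriv h (φ t) * deriv φ t * deriv φ t + h (φ t) * deriv (deriv φ) t = 0 := by
    have h1 : HasDerivAt (fun u => h (φ u) * deriv φ u) _ t := (hhd.comp t (hφ1 t)).mul hφ2
    have h2 : HasDerivAt (fun u => h (φ u) * deriv φ u) 0 t :=
      (hasDerivAt_const t c).congr_of_eventuallyEq hc
    exact h1.unique h2
  have hne : h (φ t) ≠ 0 := (hgeo _ (hmem t ht)).1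
  have hk := kr_geo g ginv ω hgsymm hginv hgsm hωsm hclosed hnorm Γ hΓ γ s hgeo (φ t) (hmem t ht)
    _ (hγ1 _ (hmem t ht)) (hγ2 _ (hmem t ht)) k
  change _ = deriv h (φ t) / h (φ t) * _ at hk
  have hsum : ∑ i, ∑ j, Γ i j k (γ (φ t))
        * deriv (fun v => γ (φ v) i) t * deriv (fun v => γ (φ v) j) t
      = (∑ i, ∑ j, Γ i j k (γ (φ t)) * deriv γ (φ t) i * deriv γ (φ t) j) * deriv φ t ^ 2 := by
    rw [Finset.sum_mul]
    refine Finset.sum_congr rfl fun i _ => ?_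
    rw [Finset.sum_mul]
    refine Finset.sum_congr rfl fun j _ => ?_
    rw [hd1 i t ht, hd1 j t ht]
    ring
  rw [hd2, hsum, eq_sub_of_add_eq' hk]
  have hφ'' : deriv (deriv φ) t = -(deriv h (φ t) * deriv φ t * deriv φ t) / h (φ t) := by
    field_simp
    linarith
  rw [hφ'']
  ring
end

section
/- Let F = g/ω be a Kropina metric on M with g non-degenerate on ker ω. For any point p ∈ M and any ξ ∈ T_pM with ω(ξ) ≠ 0, there exists a unique (up to reparametrization/locally unique in parametrized form with fixed initial data) geodesic γ of F with γ(0) = p and γ'(0) = ξ. -/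
open scoped BigOperators

section kcalc
variable {n : ℕ}

lemma fden_line {ω : Fin n → (Fin n → ℝ) → ℝ} (hω : ∀ i, ContDiff ℝ (⊤ : ℕ∞) (ω i))
    (x v X w : Fin n → ℝ) :
    HasDerivAt (fun s : ℝ => Fden ω (x + s • X) (v + s • w))
      ((∑ l, fderiv ℝ (ω l) x X * v l) + ∑ l, ω l x * w l) 0 := by
  have hx : HasDerivAt (fun s : ℝ => x + s • X) X 0 := by
    simpa using ((hasDerivAt_id (0:ℝ)).smul_const X).const_add x
  have hv : ∀ i, HasDerivAt (fun s : ℝ => (v + s • w) i) (w i) 0 := fun i => by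
    simpa using ((hasDerivAt_id (0:ℝ)).mul_const (w i)).const_add (v i)
  have ho : ∀ l, HasDerivAt (fun s : ℝ => ω l (x + s • X)) (fderiv ℝ (ω l) x X) 0 := fun l => by
    have h : HasFDerivAt (ω l) (fderiv ℝ (ω l) (x + (0:ℝ) • X)) (x + (0:ℝ) • X) :=
      (((hω l).differentiable (by simp)) _).hasFDerivAt
    simpa [Function.comp_def] using h.comp_hasDerivAt (0:ℝ) hx
  unfold Fden
  rw [← Finset.sum_add_distrib]
  refine HasDerivAt.fun_sum fun l _ => ?_
  simpa using (ho l).fun_mul (hv l)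

lemma fxi_line {g : Fin n → Fin n → (Fin n → ℝ) → ℝ} {ω : Fin n → (Fin n → ℝ) → ℝ}
    (hg : ∀ i j, ContDiff ℝ (⊤ : ℕ∞) (g i j)) (hω : ∀ i, ContDiff ℝ (⊤ : ℕ∞) (ω i))
    (x v X w : Fin n → ℝ) (hb : Fden ω x v ≠ 0) (k : Fin n) :
    HasDerivAt (fun s : ℝ => Fxi g ω k (x + s • X) (v + s • w))
      (2 * (Fden ω x v)⁻¹ * ((∑ j, fderiv ℝ (g k j) x X * v j) + ∑ j, g k j x * w j)
        - 2 * ((Fden ω x v)⁻¹)^2 * ((∑ l, fderiv ℝ (ω l) x X * v l) + ∑ l, ω l x * w l)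
          * (∑ j, g k j x * v j)
        - ((Fden ω x v)⁻¹)^2 * fderiv ℝ (ω k) x X * Fnum g x v
        - ((Fden ω x v)⁻¹)^2 * ω k x * ((∑ i, ∑ j, fderiv ℝ (g i j) x X * v i * v j)
          + (∑ i, ∑ j, g i j x * w i * v j) + (∑ i, ∑ j, g i j x * v i * w j))
        + 2 * ((Fden ω x v)⁻¹)^3 * ω k x * Fnum g x v *
          ((∑ l, fderiv ℝ (ω l) x X * v l) + ∑ l, ω l x * w l)) 0 := by
  have hx : HasDerivAt (fun s : ℝ => x + s • X) X 0 := by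
    simpa using ((hasDerivAt_id (0:ℝ)).smul_const X).const_add x
  have hv : ∀ i, HasDerivAt (fun s : ℝ => (v + s • w) i) (w i) 0 := fun i => by
    simpa using ((hasDerivAt_id (0:ℝ)).mul_const (w i)).const_add (v i)
  have hl : ∀ f : (Fin n → ℝ) → ℝ, ContDiff ℝ (⊤ : ℕ∞) f →
      HasDerivAt (fun s : ℝ => f (x + s • X)) (fderiv ℝ f x X) 0 := fun f hf => by
    have h : HasFDerivAt f (fderiv ℝ f (x + (0:ℝ) • X)) (x + (0:ℝ) • X) :=
      ((hf.differentiable (by simp)) _).hasFDerivAt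
    simpa [Function.comp_def] using h.comp_hasDerivAt (0:ℝ) hx
  have h1 := fden_line hω x v X w
  have h1i := h1.inv (by simpa using hb)
  have h2 : HasDerivAt (fun s : ℝ => Fnum g (x + s • X) (v + s • w))
      ((∑ i, ∑ j, fderiv ℝ (g i j) x X * v i * v j)
          + (∑ i, ∑ j, g i j x * w i * v j) + (∑ i, ∑ j, g i j x * v i * w j)) 0 := by
    unfold Fnum
    simp only [← Finset.sum_add_distrib]
    refine HasDerivAt.fun_sum fun i _ => HasDerivAt.fun_sum fun j _ => ?_
    refine (((hl _ (hg i j)).mul (hv i)).mul (hv j)).congr_deriv ?_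
    simp
    ring
  have h3 : HasDerivAt (fun s : ℝ => ∑ j, g k j (x + s • X) * (v + s • w) j)
      ((∑ j, fderiv ℝ (g k j) x X * v j) + ∑ j, g k j x * w j) 0 := by
    rw [← Finset.sum_add_distrib]
    refine HasDerivAt.fun_sum fun j _ => ?_
    simpa using (hl _ (hg k j)).fun_mul (hv j)
  unfold Fxi
  refine (((h1i.const_mul 2).mul h3).sub (((h1i.pow 2).mul (hl _ (hω k))).mul h2)).congr_deriv ?_
  simp
  field_simp
  ring

end kcalc

section kabs
variable {n : ℕ}

/-- `∂F/∂ξ` as a map on the tangent bundle. -/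
noncomputable def KP (g : Fin n → Fin n → (Fin n → ℝ) → ℝ) (ω : Fin n → (Fin n → ℝ) → ℝ)
    (z : (Fin n → ℝ) × (Fin n → ℝ)) : Fin n → ℝ := fun k => Fxi g ω k z.1 z.2

/-- `∂F/∂x` as a map on the tangent bundle. -/
noncomputable def KQ (g : Fin n → Fin n → (Fin n → ℝ) → ℝ) (ω : Fin n → (Fin n → ℝ) → ℝ)
    (z : (Fin n → ℝ) × (Fin n → ℝ)) : Fin n → ℝ := fun k => Fx g ω k z.1 z.2

/-- `ω(ξ)` as a map on the tangent bundle. -/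
noncomputable def KB (ω : Fin n → (Fin n → ℝ) → ℝ)
    (z : (Fin n → ℝ) × (Fin n → ℝ)) : ℝ := Fden ω z.1 z.2

/-- The one-form `ω` as a vector-valued map. -/
def KW (ω : Fin n → (Fin n → ℝ) → ℝ)
    (z : (Fin n → ℝ) × (Fin n → ℝ)) : Fin n → ℝ := fun k => ω k z.1

lemma KB_contDiff {ω : Fin n → (Fin n → ℝ) → ℝ} (hω : ∀ i, ContDiff ℝ (⊤ : ℕ∞) (ω i)) :
    ContDiff ℝ (⊤ : ℕ∞) (KB ω) := by
  unfold KB Fden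
  refine ContDiff.sum fun l _ => ?_
  have := (hω l).comp (contDiff_fst (𝕜 := ℝ) (E := Fin n → ℝ) (F := Fin n → ℝ))
  have h2 : ContDiff ℝ (⊤ : ℕ∞) (fun z : (Fin n → ℝ) × (Fin n → ℝ) => z.2 l) := by fun_prop
  exact this.mul h2

lemma KW_contDiff {ω : Fin n → (Fin n → ℝ) → ℝ} (hω : ∀ i, ContDiff ℝ (⊤ : ℕ∞) (ω i)) :
    ContDiff ℝ (⊤ : ℕ∞) (KW ω) := by
  unfold KW
  exact contDiff_pi.2 fun l => (hω l).comp contDiff_fst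

lemma pd_contDiff {f : (Fin n → ℝ) → ℝ} (hf : ContDiff ℝ (⊤ : ℕ∞) f) (k : Fin n) :
    ContDiff ℝ (⊤ : ℕ∞) (fun p => pd f p k) := by
  unfold pd
  exact (hf.fderiv_right (m := (⊤ : ℕ∞)) (by simp)).clm_apply contDiff_const

lemma Fnum_contDiff {g : Fin n → Fin n → (Fin n → ℝ) → ℝ}
    (hg : ∀ i j, ContDiff ℝ (⊤ : ℕ∞) (g i j)) :
    ContDiff ℝ (⊤ : ℕ∞) (fun z : (Fin n → ℝ) × (Fin n → ℝ) => Fnum g z.1 z.2) := by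
  unfold Fnum
  refine ContDiff.sum fun i _ => ContDiff.sum fun j _ => ?_
  have h2 : ∀ l, ContDiff ℝ (⊤ : ℕ∞) (fun z : (Fin n → ℝ) × (Fin n → ℝ) => z.2 l) :=
    fun l => by fun_prop
  exact (((hg i j).comp contDiff_fst).mul (h2 i)).mul (h2 j)

lemma KP_contDiffOn {g : Fin n → Fin n → (Fin n → ℝ) → ℝ} {ω : Fin n → (Fin n → ℝ) → ℝ}
    (hg : ∀ i j, ContDiff ℝ (⊤ : ℕ∞) (g i j)) (hω : ∀ i, ContDiff ℝ (⊤ : ℕ∞) (ω i)) :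
    ContDiffOn ℝ (⊤ : ℕ∞) (KP g ω) {z | KB ω z ≠ 0} := by
  unfold KP
  refine contDiffOn_pi.2 fun k => ?_
  have hb : ContDiffOn ℝ (⊤ : ℕ∞) (fun z => (KB ω z)⁻¹) {z | KB ω z ≠ 0} :=
    (KB_contDiff hω).contDiffOn.inv fun z hz => hz
  have h2 : ∀ l, ContDiff ℝ (⊤ : ℕ∞) (fun z : (Fin n → ℝ) × (Fin n → ℝ) => z.2 l) :=
    fun l => by fun_prop
  have h3 : ContDiff ℝ (⊤ : ℕ∞)
      (fun z : (Fin n → ℝ) × (Fin n → ℝ) => ∑ j, g k j z.1 * z.2 j) :=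
    ContDiff.sum fun j _ => ((hg k j).comp contDiff_fst).mul (h2 j)
  have h4 : ContDiff ℝ (⊤ : ℕ∞) (fun z : (Fin n → ℝ) × (Fin n → ℝ) => ω k z.1) :=
    (hω k).comp contDiff_fst
  exact ((contDiffOn_const.mul hb).mul h3.contDiffOn).sub
    (((hb.pow 2).mul h4.contDiffOn).mul (Fnum_contDiff hg).contDiffOn)

lemma KQ_contDiffOn {g : Fin n → Fin n → (Fin n → ℝ) → ℝ} {ω : Fin n → (Fin n → ℝ) → ℝ}
    (hg : ∀ i j, ContDiff ℝ (⊤ : ℕ∞) (g i j)) (hω : ∀ i, ContDiff ℝ (⊤ : ℕ∞) (ω i)) :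
    ContDiffOn ℝ (⊤ : ℕ∞) (KQ g ω) {z | KB ω z ≠ 0} := by
  unfold KQ
  refine contDiffOn_pi.2 fun k => ?_
  have hb : ContDiffOn ℝ (⊤ : ℕ∞) (fun z => (KB ω z)⁻¹) {z | KB ω z ≠ 0} :=
    (KB_contDiff hω).contDiffOn.inv fun z hz => hz
  have h2 : ∀ l, ContDiff ℝ (⊤ : ℕ∞) (fun z : (Fin n → ℝ) × (Fin n → ℝ) => z.2 l) :=
    fun l => by fun_prop
  have h3 : ContDiff ℝ (⊤ : ℕ∞)
      (fun z : (Fin n → ℝ) × (Fin n → ℝ) => ∑ i, ∑ j, pd (g i j) z.1 k * z.2 i * z.2 j) :=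
    ContDiff.sum fun i _ => ContDiff.sum fun j _ =>
      (((pd_contDiff (hg i j) k).comp contDiff_fst).mul (h2 i)).mul (h2 j)
  have h4 : ContDiff ℝ (⊤ : ℕ∞)
      (fun z : (Fin n → ℝ) × (Fin n → ℝ) => ∑ l, pd (ω l) z.1 k * z.2 l) :=
    ContDiff.sum fun l _ => ((pd_contDiff (hω l) k).comp contDiff_fst).mul (h2 l)
  exact (hb.mul h3.contDiffOn).sub
    (((hb.pow 2).mul h4.contDiffOn).mul (Fnum_contDiff hg).contDiffOn)

lemma KU_open {ω : Fin n → (Fin n → ℝ) → ℝ} (hω : ∀ i, ContDiff ℝ (⊤ : ℕ∞) (ω i)) :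
    IsOpen {z | KB ω z ≠ 0} :=
  isOpen_ne_fun (KB_contDiff hω).continuous continuous_const

lemma KP_diffAt {g : Fin n → Fin n → (Fin n → ℝ) → ℝ} {ω : Fin n → (Fin n → ℝ) → ℝ}
    (hg : ∀ i j, ContDiff ℝ (⊤ : ℕ∞) (g i j)) (hω : ∀ i, ContDiff ℝ (⊤ : ℕ∞) (ω i))
    {z : (Fin n → ℝ) × (Fin n → ℝ)} (hz : KB ω z ≠ 0) : DifferentiableAt ℝ (KP g ω) z :=
  ((KP_contDiffOn hg hω).contDiffAt ((KU_open hω).mem_nhds hz)).differentiableAt (by simp)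

lemma KB_fderiv {ω : Fin n → (Fin n → ℝ) → ℝ} (hω : ∀ i, ContDiff ℝ (⊤ : ℕ∞) (ω i))
    (z y : (Fin n → ℝ) × (Fin n → ℝ)) :
    fderiv ℝ (KB ω) z y = (∑ l, fderiv ℝ (ω l) z.1 y.1 * z.2 l) + ∑ l, ω l z.1 * y.2 l := by
  have h1 := fden_line hω z.1 z.2 y.1 y.2
  have hx : HasDerivAt (fun s : ℝ => z + s • y) y 0 := by
    simpa using ((hasDerivAt_id (0:ℝ)).smul_const y).const_add z
  have h : HasFDerivAt (KB ω) (fderiv ℝ (KB ω) (z + (0:ℝ) • y)) (z + (0:ℝ) • y) :=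
      (((KB_contDiff hω).differentiable (by simp)) _).hasFDerivAt
  have h2 := h.comp_hasDerivAt (0:ℝ) hx
  rw [zero_smul, add_zero] at h2
  exact h2.unique h1

lemma KP_fderiv {g : Fin n → Fin n → (Fin n → ℝ) → ℝ} {ω : Fin n → (Fin n → ℝ) → ℝ}
    (hg : ∀ i j, ContDiff ℝ (⊤ : ℕ∞) (g i j)) (hω : ∀ i, ContDiff ℝ (⊤ : ℕ∞) (ω i))
    (z y : (Fin n → ℝ) × (Fin n → ℝ)) (hz : KB ω z ≠ 0) (k : Fin n) :
    fderiv ℝ (KP g ω) z y k =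
      2 * (Fden ω z.1 z.2)⁻¹ * ((∑ j, fderiv ℝ (g k j) z.1 y.1 * z.2 j) + ∑ j, g k j z.1 * y.2 j)
        - 2 * ((Fden ω z.1 z.2)⁻¹)^2 *
          ((∑ l, fderiv ℝ (ω l) z.1 y.1 * z.2 l) + ∑ l, ω l z.1 * y.2 l)
          * (∑ j, g k j z.1 * z.2 j)
        - ((Fden ω z.1 z.2)⁻¹)^2 * fderiv ℝ (ω k) z.1 y.1 * Fnum g z.1 z.2
        - ((Fden ω z.1 z.2)⁻¹)^2 * ω k z.1 *
          ((∑ i, ∑ j, fderiv ℝ (g i j) z.1 y.1 * z.2 i * z.2 j)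
          + (∑ i, ∑ j, g i j z.1 * y.2 i * z.2 j) + (∑ i, ∑ j, g i j z.1 * z.2 i * y.2 j))
        + 2 * ((Fden ω z.1 z.2)⁻¹)^3 * ω k z.1 * Fnum g z.1 z.2 *
          ((∑ l, fderiv ℝ (ω l) z.1 y.1 * z.2 l) + ∑ l, ω l z.1 * y.2 l) := by
  have h1 := fxi_line hg hω z.1 z.2 y.1 y.2 hz k
  have hx : HasDerivAt (fun s : ℝ => z + s • y) y 0 := by
    simpa using ((hasDerivAt_id (0:ℝ)).smul_const y).const_add z
  have h : HasFDerivAt (KP g ω) (fderiv ℝ (KP g ω) (z + (0:ℝ) • y)) (z + (0:ℝ) • y) := by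
    rw [zero_smul, add_zero]
    exact (KP_diffAt hg hω hz).hasFDerivAt
  have h2 := h.comp_hasDerivAt (0:ℝ) hx
  rw [zero_smul, add_zero] at h2
  exact (hasDerivAt_pi.1 h2 k).unique h1

lemma KP_a {g : Fin n → Fin n → (Fin n → ℝ) → ℝ} {ω : Fin n → (Fin n → ℝ) → ℝ}
    (hsymm : ∀ i j, g i j = g j i)
    (hg : ∀ i j, ContDiff ℝ (⊤ : ℕ∞) (g i j)) (hω : ∀ i, ContDiff ℝ (⊤ : ℕ∞) (ω i))
    (z : (Fin n → ℝ) × (Fin n → ℝ)) (w : Fin n → ℝ) (hz : KB ω z ≠ 0) :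
    ∑ k, z.2 k * fderiv ℝ (KP g ω) z (0, w) k = 0 := by
  have e1 : ∑ k, z.2 k * (∑ j, g k j z.1 * w j) = ∑ i, ∑ j, g i j z.1 * z.2 i * w j := by
    simp only [Finset.mul_sum]
    exact Finset.sum_congr rfl fun i _ => Finset.sum_congr rfl fun j _ => by ring
  have e2 : ∑ i, ∑ j, g i j z.1 * w i * z.2 j = ∑ i, ∑ j, g i j z.1 * z.2 i * w j := by
    rw [Finset.sum_comm]
    exact Finset.sum_congr rfl fun i _ => Finset.sum_congr rfl fun j _ => by
      rw [hsymm]; ring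
  have e3 : ∑ k, z.2 k * (∑ j, g k j z.1 * z.2 j) = Fnum g z.1 z.2 := by
    unfold Fnum
    simp only [Finset.mul_sum]
    exact Finset.sum_congr rfl fun i _ => Finset.sum_congr rfl fun j _ => by ring
  have e4 : ∑ k, z.2 k * ω k z.1 = Fden ω z.1 z.2 := by
    unfold Fden
    exact Finset.sum_congr rfl fun i _ => by ring
  have hb : Fden ω z.1 z.2 ≠ 0 := hz
  have key : ∀ k, z.2 k * fderiv ℝ (KP g ω) z (0, w) k =
      (2 * (Fden ω z.1 z.2)⁻¹) * (z.2 k * (∑ j, g k j z.1 * w j))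
      - (2 * ((Fden ω z.1 z.2)⁻¹)^2 * (∑ l, ω l z.1 * w l)) * (z.2 k * (∑ j, g k j z.1 * z.2 j))
      + (- ((Fden ω z.1 z.2)⁻¹)^2 * (2 * ∑ i, ∑ j, g i j z.1 * z.2 i * w j)
        + 2 * ((Fden ω z.1 z.2)⁻¹)^3 * Fnum g z.1 z.2 * (∑ l, ω l z.1 * w l))
        * (z.2 k * ω k z.1) := by
    intro k
    rw [KP_fderiv hg hω _ _ hz]
    simp only [map_zero, zero_mul, Finset.sum_const_zero, e2]
    ring
  rw [Finset.sum_congr rfl fun k _ => key k]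
  simp only [Finset.sum_add_distrib, Finset.sum_sub_distrib, ← Finset.mul_sum, e1, e3, e4]
  field_simp
  ring

lemma sum_pd (f : (Fin n → ℝ) → ℝ) (x v : Fin n → ℝ) :
    ∑ k, v k * pd f x k = fderiv ℝ f x v := by
  conv_rhs => rw [pi_eq_sum_univ' v]
  unfold pd
  rw [map_sum]
  refine Finset.sum_congr rfl fun k _ => ?_
  rw [map_smul, smul_eq_mul]

lemma KP_b {g : Fin n → Fin n → (Fin n → ℝ) → ℝ} {ω : Fin n → (Fin n → ℝ) → ℝ}
    (hg : ∀ i j, ContDiff ℝ (⊤ : ℕ∞) (g i j)) (hω : ∀ i, ContDiff ℝ (⊤ : ℕ∞) (ω i))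
    (z : (Fin n → ℝ) × (Fin n → ℝ)) (hz : KB ω z ≠ 0) :
    ∑ k, z.2 k * fderiv ℝ (KP g ω) z (z.2, 0) k = ∑ k, z.2 k * KQ g ω z k := by
  have e1 : ∑ k, z.2 k * (∑ j, fderiv ℝ (g k j) z.1 z.2 * z.2 j)
      = ∑ i, ∑ j, fderiv ℝ (g i j) z.1 z.2 * z.2 i * z.2 j := by
    simp only [Finset.mul_sum]
    exact Finset.sum_congr rfl fun i _ => Finset.sum_congr rfl fun j _ => by ring
  have e3 : ∑ k, z.2 k * (∑ j, g k j z.1 * z.2 j) = Fnum g z.1 z.2 := by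
    unfold Fnum
    simp only [Finset.mul_sum]
    exact Finset.sum_congr rfl fun i _ => Finset.sum_congr rfl fun j _ => by ring
  have e4 : ∑ k, z.2 k * ω k z.1 = Fden ω z.1 z.2 := by
    unfold Fden
    exact Finset.sum_congr rfl fun i _ => by ring
  have e5 : ∑ k, z.2 k * fderiv ℝ (ω k) z.1 z.2 = ∑ l, fderiv ℝ (ω l) z.1 z.2 * z.2 l :=
    Finset.sum_congr rfl fun i _ => by ring
  have e6 : ∑ k, z.2 k * (∑ i, ∑ j, pd (g i j) z.1 k * z.2 i * z.2 j)
      = ∑ i, ∑ j, fderiv ℝ (g i j) z.1 z.2 * z.2 i * z.2 j := by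
    simp only [Finset.mul_sum, ← sum_pd, Finset.sum_mul]
    rw [Finset.sum_comm]
    refine Finset.sum_congr rfl fun i _ => ?_
    rw [Finset.sum_comm]
    exact Finset.sum_congr rfl fun j _ => Finset.sum_congr rfl fun k _ => by ring
  have e7 : ∑ k, z.2 k * (∑ l, pd (ω l) z.1 k * z.2 l)
      = ∑ l, fderiv ℝ (ω l) z.1 z.2 * z.2 l := by
    simp only [Finset.mul_sum, ← sum_pd, Finset.sum_mul]
    rw [Finset.sum_comm]
    exact Finset.sum_congr rfl fun j _ => Finset.sum_congr rfl fun k _ => by ring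
  have hb : Fden ω z.1 z.2 ≠ 0 := hz
  have key : ∀ k, z.2 k * fderiv ℝ (KP g ω) z (z.2, 0) k =
      (2 * (Fden ω z.1 z.2)⁻¹) * (z.2 k * (∑ j, fderiv ℝ (g k j) z.1 z.2 * z.2 j))
      - (2 * ((Fden ω z.1 z.2)⁻¹)^2 * (∑ l, fderiv ℝ (ω l) z.1 z.2 * z.2 l))
        * (z.2 k * (∑ j, g k j z.1 * z.2 j))
      - (((Fden ω z.1 z.2)⁻¹)^2 * Fnum g z.1 z.2) * (z.2 k * fderiv ℝ (ω k) z.1 z.2)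
      + (- ((Fden ω z.1 z.2)⁻¹)^2 * (∑ i, ∑ j, fderiv ℝ (g i j) z.1 z.2 * z.2 i * z.2 j)
        + 2 * ((Fden ω z.1 z.2)⁻¹)^3 * Fnum g z.1 z.2 * (∑ l, fderiv ℝ (ω l) z.1 z.2 * z.2 l))
        * (z.2 k * ω k z.1) := by
    intro k
    rw [KP_fderiv hg hω _ _ hz]
    simp only [Pi.zero_apply, mul_zero, zero_mul, Finset.sum_const_zero]
    ring
  have key2 : ∀ k, z.2 k * KQ g ω z k =
      (Fden ω z.1 z.2)⁻¹ * (z.2 k * (∑ i, ∑ j, pd (g i j) z.1 k * z.2 i * z.2 j))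
      - (((Fden ω z.1 z.2)⁻¹)^2 * Fnum g z.1 z.2) * (z.2 k * (∑ l, pd (ω l) z.1 k * z.2 l)) := by
    intro k
    unfold KQ Fx
    ring
  rw [Finset.sum_congr rfl fun k _ => key k, Finset.sum_congr rfl fun k _ => key2 k]
  simp only [Finset.sum_add_distrib, Finset.sum_sub_distrib, ← Finset.mul_sum, e1, e3, e4, e5,
    e6, e7]
  field_simp
  ring

lemma KP_c {g : Fin n → Fin n → (Fin n → ℝ) → ℝ} {ω : Fin n → (Fin n → ℝ) → ℝ}
    (hsymm : ∀ i j, g i j = g j i)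
    (hg : ∀ i j, ContDiff ℝ (⊤ : ℕ∞) (g i j)) (hω : ∀ i, ContDiff ℝ (⊤ : ℕ∞) (ω i))
    (hnd : ∀ (p v : Fin n → ℝ), (∑ l, ω l p * v l) = 0 →
      (∀ w : Fin n → ℝ, (∑ l, ω l p * w l) = 0 →
        (∑ i, ∑ j, g i j p * v i * w j) = 0) → v = 0)
    (z : (Fin n → ℝ) × (Fin n → ℝ)) (w : Fin n → ℝ) (hz : KB ω z ≠ 0)
    (h1 : ∑ l, ω l z.1 * w l = 0) (h2 : fderiv ℝ (KP g ω) z (0, w) = 0) : w = 0 := by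
  refine hnd z.1 w h1 fun u hu => ?_
  have hb : Fden ω z.1 z.2 ≠ 0 := hz
  have e1 : ∑ i, ∑ j, g i j z.1 * w i * u j = ∑ k, u k * (∑ j, g k j z.1 * w j) := by
    simp only [Finset.mul_sum]
    rw [Finset.sum_comm]
    exact Finset.sum_congr rfl fun i _ => Finset.sum_congr rfl fun j _ => by rw [hsymm]; ring
  obtain ⟨C, hC⟩ : ∃ C : ℝ, ∀ k, ∑ j, g k j z.1 * w j = C * ω k z.1 := by
    refine ⟨((Fden ω z.1 z.2)⁻¹) / 2 * ((∑ i, ∑ j, g i j z.1 * w i * z.2 j)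
      + (∑ i, ∑ j, g i j z.1 * z.2 i * w j)), fun k => ?_⟩
    have h3 := KP_fderiv hg hω z (0, w) hz k
    rw [h2] at h3
    simp only [map_zero, zero_mul, Finset.sum_const_zero, h1, Pi.zero_apply, mul_zero, zero_add,
      add_zero, sub_zero] at h3
    field_simp at h3 ⊢
    linarith
  rw [e1]
  have : ∑ k, u k * (∑ j, g k j z.1 * w j) = C * ∑ l, ω l z.1 * u l := by
    rw [Finset.mul_sum]
    exact Finset.sum_congr rfl fun k _ => by rw [hC]; ring
  rw [this, hu, mul_zero]

end kabs

section kspray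
variable {n : ℕ}

/-- The Hessian of `F` in the fibre directions, corrected by `ω ⊗ ω`. -/
noncomputable def KA (g : Fin n → Fin n → (Fin n → ℝ) → ℝ) (ω : Fin n → (Fin n → ℝ) → ℝ)
    (z : (Fin n → ℝ) × (Fin n → ℝ)) : (Fin n → ℝ) →L[ℝ] (Fin n → ℝ) :=
  (fderiv ℝ (KP g ω) z).comp (ContinuousLinearMap.inr ℝ (Fin n → ℝ) (Fin n → ℝ)) +
    ((fderiv ℝ (KB ω) z).comp
      (ContinuousLinearMap.inr ℝ (Fin n → ℝ) (Fin n → ℝ))).smulRight (KW ω z)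

/-- The geodesic spray, normalised so that `ω` of the velocity is constant. -/
noncomputable def KG (g : Fin n → Fin n → (Fin n → ℝ) → ℝ) (ω : Fin n → (Fin n → ℝ) → ℝ)
    (z : (Fin n → ℝ) × (Fin n → ℝ)) : Fin n → ℝ :=
  (KA g ω z).inverse (KQ g ω z - fderiv ℝ (KP g ω) z (z.2, 0)
    - fderiv ℝ (KB ω) z (z.2, 0) • KW ω z)

lemma KA_apply (g : Fin n → Fin n → (Fin n → ℝ) → ℝ) (ω : Fin n → (Fin n → ℝ) → ℝ)
    (z : (Fin n → ℝ) × (Fin n → ℝ)) (w : Fin n → ℝ) :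
    KA g ω z w = fderiv ℝ (KP g ω) z (0, w) + fderiv ℝ (KB ω) z (0, w) • KW ω z := by
  simp [KA]

lemma KB_eq_sum (ω : Fin n → (Fin n → ℝ) → ℝ) (z : (Fin n → ℝ) × (Fin n → ℝ)) :
    ∑ k, z.2 k * KW ω z k = KB ω z := by
  unfold KW KB Fden
  exact Finset.sum_congr rfl fun i _ => by ring

variable {g : Fin n → Fin n → (Fin n → ℝ) → ℝ} {ω : Fin n → (Fin n → ℝ) → ℝ}

lemma KA_contr
    (hsymm : ∀ i j, g i j = g j i)
    (hg : ∀ i j, ContDiff ℝ (⊤ : ℕ∞) (g i j))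
    (hω : ∀ i, ContDiff ℝ (⊤ : ℕ∞) (ω i))
    (z : (Fin n → ℝ) × (Fin n → ℝ)) (w : Fin n → ℝ) (hz : KB ω z ≠ 0) :
    ∑ k, z.2 k * KA g ω z w k = fderiv ℝ (KB ω) z (0, w) * KB ω z := by
  simp only [KA_apply, Pi.add_apply, Pi.smul_apply, smul_eq_mul, mul_add, Finset.sum_add_distrib]
  rw [KP_a hsymm hg hω z w hz, ← KB_eq_sum, Finset.mul_sum, zero_add]
  exact Finset.sum_congr rfl fun i _ => by ring

lemma KA_inj
    (hsymm : ∀ i j, g i j = g j i)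
    (hg : ∀ i j, ContDiff ℝ (⊤ : ℕ∞) (g i j))
    (hω : ∀ i, ContDiff ℝ (⊤ : ℕ∞) (ω i))
    (hnd : ∀ (p v : Fin n → ℝ), (∑ l, ω l p * v l) = 0 →
      (∀ w : Fin n → ℝ, (∑ l, ω l p * w l) = 0 →
        (∑ i, ∑ j, g i j p * v i * w j) = 0) → v = 0)
    (z : (Fin n → ℝ) × (Fin n → ℝ)) (hz : KB ω z ≠ 0) :
    Function.Injective (KA g ω z) := by
  rw [injective_iff_map_eq_zero]
  intro w hw
  have h1 := KA_contr hsymm hg hω z w hz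
  rw [hw] at h1
  simp only [Pi.zero_apply, mul_zero, Finset.sum_const_zero] at h1
  have h2 : fderiv ℝ (KB ω) z (0, w) = 0 := by
    rcases mul_eq_zero.1 h1.symm with h | h
    · exact h
    · exact absurd h hz
  have h3 := hw
  rw [KA_apply, h2, zero_smul, add_zero] at h3
  rw [KB_fderiv hω] at h2
  simp only [map_zero, zero_mul, Finset.sum_const_zero, zero_add] at h2
  exact KP_c hsymm hg hω hnd z w hz h2 h3

lemma KA_equiv
    (hsymm : ∀ i j, g i j = g j i)
    (hg : ∀ i j, ContDiff ℝ (⊤ : ℕ∞) (g i j))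
    (hω : ∀ i, ContDiff ℝ (⊤ : ℕ∞) (ω i))
    (hnd : ∀ (p v : Fin n → ℝ), (∑ l, ω l p * v l) = 0 →
      (∀ w : Fin n → ℝ, (∑ l, ω l p * w l) = 0 →
        (∑ i, ∑ j, g i j p * v i * w j) = 0) → v = 0)
    (z : (Fin n → ℝ) × (Fin n → ℝ)) (hz : KB ω z ≠ 0) :
    ∃ e : (Fin n → ℝ) ≃L[ℝ] (Fin n → ℝ), (e : (Fin n → ℝ) →L[ℝ] (Fin n → ℝ)) = KA g ω z := by
  refine ⟨(LinearEquiv.ofInjectiveEndo (KA g ω z : (Fin n → ℝ) →ₗ[ℝ] (Fin n → ℝ))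
    (KA_inj hsymm hg hω hnd z hz)).toContinuousLinearEquiv, ?_⟩
  ext w
  simp

lemma KA_KG
    (hsymm : ∀ i j, g i j = g j i)
    (hg : ∀ i j, ContDiff ℝ (⊤ : ℕ∞) (g i j))
    (hω : ∀ i, ContDiff ℝ (⊤ : ℕ∞) (ω i))
    (hnd : ∀ (p v : Fin n → ℝ), (∑ l, ω l p * v l) = 0 →
      (∀ w : Fin n → ℝ, (∑ l, ω l p * w l) = 0 →
        (∑ i, ∑ j, g i j p * v i * w j) = 0) → v = 0)
    (z : (Fin n → ℝ) × (Fin n → ℝ)) (hz : KB ω z ≠ 0) :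
    KA g ω z (KG g ω z) = KQ g ω z - fderiv ℝ (KP g ω) z (z.2, 0)
    - fderiv ℝ (KB ω) z (z.2, 0) • KW ω z := by
  obtain ⟨e, he⟩ := KA_equiv hsymm hg hω hnd z hz
  unfold KG
  rw [← he, ContinuousLinearMap.inverse_equiv]
  simp

lemma KG_unique
    (hsymm : ∀ i j, g i j = g j i)
    (hg : ∀ i j, ContDiff ℝ (⊤ : ℕ∞) (g i j))
    (hω : ∀ i, ContDiff ℝ (⊤ : ℕ∞) (ω i))
    (hnd : ∀ (p v : Fin n → ℝ), (∑ l, ω l p * v l) = 0 →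
      (∀ w : Fin n → ℝ, (∑ l, ω l p * w l) = 0 →
        (∑ i, ∑ j, g i j p * v i * w j) = 0) → v = 0)
    (z : (Fin n → ℝ) × (Fin n → ℝ)) (hz : KB ω z ≠ 0) (c : ℝ) (w : Fin n → ℝ)
    (h1 : fderiv ℝ (KP g ω) z (c • z.2, w) = c • KQ g ω z)
    (h2 : fderiv ℝ (KB ω) z (c • z.2, w) = 0) : w = c • KG g ω z := by
  apply KA_inj hsymm hg hω hnd z hz
  rw [map_smul, KA_KG hsymm hg hω hnd z hz, KA_apply]
  have e : (c • z.2, w) = c • (z.2, (0 : Fin n → ℝ)) + ((0 : Fin n → ℝ), w) := by simp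
  rw [e, map_add, map_smul] at h1 h2
  rw [smul_sub, smul_sub, ← h1, smul_smul, ← smul_eq_mul, eq_neg_of_add_eq_zero_left h2]
  simp

lemma KG_spec
    (hsymm : ∀ i j, g i j = g j i)
    (hg : ∀ i j, ContDiff ℝ (⊤ : ℕ∞) (g i j))
    (hω : ∀ i, ContDiff ℝ (⊤ : ℕ∞) (ω i))
    (hnd : ∀ (p v : Fin n → ℝ), (∑ l, ω l p * v l) = 0 →
      (∀ w : Fin n → ℝ, (∑ l, ω l p * w l) = 0 →
        (∑ i, ∑ j, g i j p * v i * w j) = 0) → v = 0)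
    (z : (Fin n → ℝ) × (Fin n → ℝ)) (hz : KB ω z ≠ 0) :
    fderiv ℝ (KP g ω) z (z.2, KG g ω z) = KQ g ω z := by
  have h1 := KA_KG hsymm hg hω hnd z hz
  have h2 := KA_contr hsymm hg hω z (KG g ω z) hz
  rw [h1] at h2
  simp only [Pi.sub_apply, Pi.smul_apply, smul_eq_mul, mul_sub, Finset.sum_sub_distrib] at h2
  rw [KP_b hg hω z hz, sub_self, zero_sub] at h2
  have h3 : ∑ k, z.2 k * (fderiv ℝ (KB ω) z (z.2, 0) * KW ω z k)
      = fderiv ℝ (KB ω) z (z.2, 0) * KB ω z := by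
    rw [← KB_eq_sum, Finset.mul_sum]
    exact Finset.sum_congr rfl fun i _ => by ring
  rw [h3, ← neg_mul] at h2
  have h4 := mul_right_cancel₀ hz h2
  rw [KA_apply, ← h4] at h1
  have e : (z.2, KG g ω z) = (z.2, (0 : Fin n → ℝ)) + ((0 : Fin n → ℝ), KG g ω z) := by simp
  rw [e, map_add]
  rw [neg_smul] at h1
  have h5 : fderiv ℝ (KP g ω) z (0, KG g ω z) = KQ g ω z - fderiv ℝ (KP g ω) z (z.2, 0) := by
    have := congrArg (· + fderiv ℝ (KB ω) z (z.2, 0) • KW ω z) h1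
    simpa using this
  rw [h5]
  abel

lemma KG_contDiffOn
    (hsymm : ∀ i j, g i j = g j i)
    (hg : ∀ i j, ContDiff ℝ (⊤ : ℕ∞) (g i j))
    (hω : ∀ i, ContDiff ℝ (⊤ : ℕ∞) (ω i))
    (hnd : ∀ (p v : Fin n → ℝ), (∑ l, ω l p * v l) = 0 →
      (∀ w : Fin n → ℝ, (∑ l, ω l p * w l) = 0 →
        (∑ i, ∑ j, g i j p * v i * w j) = 0) → v = 0)
    : ContDiffOn ℝ (⊤ : ℕ∞) (KG g ω) {z | KB ω z ≠ 0} := by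
  have hU := KU_open hω
  have hdP : ContDiffOn ℝ (⊤ : ℕ∞) (fderiv ℝ (KP g ω)) {z | KB ω z ≠ 0} :=
    (KP_contDiffOn hg hω).fderiv_of_isOpen hU (by simp)
  have hdB : ContDiffOn ℝ (⊤ : ℕ∞) (fderiv ℝ (KB ω)) {z | KB ω z ≠ 0} :=
    (KB_contDiff hω).contDiffOn.fderiv_of_isOpen hU (by simp)
  have hW := (KW_contDiff hω).contDiffOn (s := {z | KB ω z ≠ 0})
  have hA : ContDiffOn ℝ (⊤ : ℕ∞) (KA g ω) {z | KB ω z ≠ 0} := by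
    unfold KA
    exact (hdP.clm_comp contDiffOn_const).add
      ((hdB.clm_comp contDiffOn_const).smulRight hW)
  have hz2 : ContDiffOn ℝ (⊤ : ℕ∞)
      (fun z : (Fin n → ℝ) × (Fin n → ℝ) => (z.2, (0 : Fin n → ℝ))) {z | KB ω z ≠ 0} := by
    fun_prop
  have hr : ContDiffOn ℝ (⊤ : ℕ∞) (fun z => KQ g ω z - fderiv ℝ (KP g ω) z (z.2, 0)
    - fderiv ℝ (KB ω) z (z.2, 0) • KW ω z) {z | KB ω z ≠ 0} :=
    ((KQ_contDiffOn hg hω).sub (hdP.clm_apply hz2)).sub ((hdB.clm_apply hz2).smul hW)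
  have hi : ContDiffOn ℝ (⊤ : ℕ∞) (fun z => (KA g ω z).inverse) {z | KB ω z ≠ 0} := by
    intro z hz
    obtain ⟨e, he⟩ := KA_equiv hsymm hg hω hnd z hz
    have h1 := contDiffAt_map_inverse (𝕜 := ℝ) (n := ((⊤ : ℕ∞) : WithTop ℕ∞)) e
    rw [he] at h1
    exact h1.comp_contDiffWithinAt z (hA z hz)
  exact hi.clm_apply hr

lemma KP_homog (x v : Fin n → ℝ) {c : ℝ} (hc : c ≠ 0) (k : Fin n) :
    Fxi g ω k x (c • v) = Fxi g ω k x v := by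
  have h1 : Fden ω x (c • v) = c * Fden ω x v := by
    unfold Fden
    rw [Finset.mul_sum]
    exact Finset.sum_congr rfl fun i _ => by simp; ring
  have h2 : Fnum g x (c • v) = c ^ 2 * Fnum g x v := by
    unfold Fnum
    simp only [Finset.mul_sum]
    exact Finset.sum_congr rfl fun i _ => Finset.sum_congr rfl fun j _ => by simp; ring
  have h3 : ∑ j, g k j x * (c • v) j = c * ∑ j, g k j x * v j := by
    rw [Finset.mul_sum]
    exact Finset.sum_congr rfl fun i _ => by simp; ring
  unfold Fxi
  rw [h1, h2, h3, mul_inv]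
  field_simp

lemma KQ_homog (x v : Fin n → ℝ) {c : ℝ} (hc : c ≠ 0) (k : Fin n) :
    Fx g ω k x (c • v) = c * Fx g ω k x v := by
  have h1 : Fden ω x (c • v) = c * Fden ω x v := by
    unfold Fden
    rw [Finset.mul_sum]
    exact Finset.sum_congr rfl fun i _ => by simp; ring
  have h2 : Fnum g x (c • v) = c ^ 2 * Fnum g x v := by
    unfold Fnum
    simp only [Finset.mul_sum]
    exact Finset.sum_congr rfl fun i _ => Finset.sum_congr rfl fun j _ => by simp; ring
  have h3 : ∑ i, ∑ j, pd (g i j) x k * (c • v) i * (c • v) j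
      = c ^ 2 * ∑ i, ∑ j, pd (g i j) x k * v i * v j := by
    simp only [Finset.mul_sum]
    exact Finset.sum_congr rfl fun i _ => Finset.sum_congr rfl fun j _ => by simp; ring
  have h4 : ∑ l, pd (ω l) x k * (c • v) l = c * ∑ l, pd (ω l) x k * v l := by
    rw [Finset.mul_sum]
    exact Finset.sum_congr rfl fun i _ => by simp; ring
  unfold Fx
  rw [h1, h2, h3, h4, mul_inv]
  field_simp

end kspray

section kode

lemma ode_smooth {E : Type*} [NormedAddCommGroup E] [NormedSpace ℝ E] {f : E → E} {U : Set E}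
    {α : ℝ → E} {I : Set ℝ} (hI : IsOpen I) (hf : ContDiffOn ℝ (⊤ : ℕ∞) f U)
    (hα : ∀ t ∈ I, HasDerivAt α (f (α t)) t) (hm : ∀ t ∈ I, α t ∈ U) :
    ContDiffOn ℝ (⊤ : ℕ∞) α I := by
  rw [contDiffOn_infty]
  intro m
  have hd : DifferentiableOn ℝ α I := fun t ht =>
    (hα t ht).differentiableAt.differentiableWithinAt
  induction m with
  | zero => exact contDiffOn_zero.2 hd.continuousOn
  | succ m ih =>
    push_cast
    rw [contDiffOn_succ_iff_deriv_of_isOpen hI]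
    refine ⟨hd, by simp, ?_⟩
    have : ContDiffOn ℝ m (fun t => f (α t)) I :=
      (hf.of_le (by exact_mod_cast le_top)).comp ih hm
    exact this.congr fun t ht => (hα t ht).deriv

lemma prim_exists {lam : ℝ → ℝ} {ε : ℝ} (h : ContinuousOn lam (Set.Ioo (-ε) ε)) :
    ∃ φ : ℝ → ℝ, φ 0 = 0 ∧ ∀ t ∈ Set.Ioo (-ε) ε, HasDerivAt φ (lam t) t := by
  refine ⟨fun t => ∫ s in (0:ℝ)..t, lam s, by simp, fun t ht => ?_⟩
  have h0 : (0:ℝ) ∈ Set.Ioo (-ε) ε := by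
    obtain ⟨h1, h2⟩ := ht
    constructor <;> linarith
  refine intervalIntegral.integral_hasDerivAt_right ?_ ?_ ?_
  · exact (h.mono (Set.OrdConnected.uIcc_subset Set.ordConnected_Ioo h0 ht)).intervalIntegrable
  · exact h.stronglyMeasurableAtFilter isOpen_Ioo t ht
  · exact h.continuousAt (isOpen_Ioo.mem_nhds ht)

variable {n : ℕ} {g : Fin n → Fin n → (Fin n → ℝ) → ℝ} {ω : Fin n → (Fin n → ℝ) → ℝ}

lemma Fden_smul (x v : Fin n → ℝ) (c : ℝ) : Fden ω x (c • v) = c * Fden ω x v := by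
  unfold Fden
  rw [Finset.mul_sum]
  exact Finset.sum_congr rfl fun i _ => by simp; ring

/-- A geodesic, renormalised so that `ω(v)` is constant, follows the spray. -/
lemma geod_spray
    (hsymm : ∀ i j, g i j = g j i)
    (hg : ∀ i j, ContDiff ℝ (⊤ : ℕ∞) (g i j))
    (hω : ∀ i, ContDiff ℝ (⊤ : ℕ∞) (ω i))
    (hnd : ∀ (p v : Fin n → ℝ), (∑ l, ω l p * v l) = 0 →
      (∀ w : Fin n → ℝ, (∑ l, ω l p * w l) = 0 →
        (∑ i, ∑ j, g i j p * v i * w j) = 0) → v = 0)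
    {y : ℝ → Fin n → ℝ} {I : Set ℝ} (hI : IsOpen I)
    (hy : ContDiffOn ℝ (⊤ : ℕ∞) y I) (hgeo : IsKropinaGeodesicOn g ω y I)
    {c₀ : ℝ} (hc : c₀ ≠ 0) {lam : ℝ → ℝ} (hlam : lam = fun t => Fden ω (y t) (deriv y t) / c₀)
    {β : ℝ → (Fin n → ℝ) × (Fin n → ℝ)} (hβ : β = fun t => (y t, (lam t)⁻¹ • deriv y t)) :
    ContinuousOn lam I ∧
      ∀ t ∈ I, HasDerivAt β (lam t • ((β t).2, KG g ω (β t))) t := by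
  have hdy : ContDiffOn ℝ (⊤ : ℕ∞) (deriv y) I := ((contDiffOn_infty_iff_deriv_of_isOpen hI).1 hy).2
  have hya : ∀ t ∈ I, HasDerivAt y (deriv y t) t := fun t ht =>
    ((hy.differentiableOn (by simp)).differentiableAt (hI.mem_nhds ht)).hasDerivAt
  have hyb : ∀ t ∈ I, DifferentiableAt ℝ (deriv y) t := fun t ht =>
    (hdy.differentiableOn (by simp)).differentiableAt (hI.mem_nhds ht)
  have hlamd : ∀ t ∈ I, DifferentiableAt ℝ lam t := by
    intro t ht
    rw [hlam]
    have h1 : DifferentiableAt ℝ (fun t => KB ω (y t, deriv y t)) t :=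
      DifferentiableAt.comp (g := KB ω) t (((KB_contDiff hω).differentiable (by simp)) _)
        ((hya t ht).differentiableAt.prodMk (hyb t ht))
    exact h1.div_const c₀
  have hl0 : ∀ t ∈ I, lam t ≠ 0 := by
    intro t ht
    rw [hlam]
    exact div_ne_zero (hgeo t ht).1 hc
  refine ⟨fun t ht => (hlamd t ht).continuousAt.continuousWithinAt, fun t ht => ?_⟩
  have hBc : ∀ u ∈ I, KB ω (β u) = c₀ := by
    intro u hu
    have h1 := hl0 u hu
    have h2 : Fden ω (y u) (deriv y u) = lam u * c₀ := by
      rw [hlam]; field_simp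
    rw [hβ]
    show Fden ω (y u) ((lam u)⁻¹ • deriv y u) = c₀
    rw [Fden_smul, h2]
    field_simp
  have hsm : ∀ u ∈ I, deriv y u = lam u • (β u).2 := by
    intro u hu
    rw [hβ]
    simp [smul_smul, hl0 u hu]
  have hz : KB ω (β t) ≠ 0 := by rw [hBc t ht]; exact hc
  have hvd : DifferentiableAt ℝ (fun u => (lam u)⁻¹ • deriv y u) t :=
    ((hlamd t ht).inv (hl0 t ht)).smul (hyb t ht)
  set w := deriv (fun u => (lam u)⁻¹ • deriv y u) t with hw
  have hβd : HasDerivAt β (lam t • (β t).2, w) t := by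
    rw [← hsm t ht]
    conv => arg 1; rw [hβ]
    exact (hya t ht).prodMk hvd.hasDerivAt
  have e1 : fderiv ℝ (KB ω) (β t) (lam t • (β t).2, w) = 0 := by
    have h1 : HasFDerivAt (KB ω) (fderiv ℝ (KB ω) (β t)) (β t) :=
      (((KB_contDiff hω).differentiable (by simp)) _).hasFDerivAt
    have h2 := h1.comp_hasDerivAt t hβd
    refine h2.unique ((hasDerivAt_const t c₀).congr_of_eventuallyEq ?_)
    filter_upwards [hI.mem_nhds ht] with u hu using hBc u hu
  have e2 : fderiv ℝ (KP g ω) (β t) (lam t • (β t).2, w) = lam t • KQ g ω (β t) := by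
    have h1 : HasFDerivAt (KP g ω) (fderiv ℝ (KP g ω) (β t)) (β t) :=
      (KP_diffAt hg hω hz).hasFDerivAt
    have h2 := h1.comp_hasDerivAt t hβd
    ext k
    have h3 := (hgeo t ht).2 k
    have h4 : Fx g ω k (y t) (deriv y t) = lam t * KQ g ω (β t) k := by
      rw [hsm t ht, KQ_homog _ _ (hl0 t ht)]
      rw [hβ]; rfl
    rw [h4] at h3
    refine (hasDerivAt_pi.1 h2 k).unique (h3.congr_of_eventuallyEq ?_)
    filter_upwards [hI.mem_nhds ht] with u hu
    rw [hsm u hu, KP_homog _ _ (hl0 u hu)]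
    simp only [hβ]; rfl
  have e3 := KG_unique hsymm hg hω hnd (β t) hz (lam t) w e2 e1
  rw [e3] at hβd
  exact hβd

end kode

/-- Existence and local uniqueness (up to reparametrization) of the Kropina geodesic
with initial point `p` and initial velocity `ξ` transverse to `ker ω`. -/
theorem stmt11 {n : ℕ}
    (g : Fin n → Fin n → (Fin n → ℝ) → ℝ) (ω : Fin n → (Fin n → ℝ) → ℝ)
    (hgsymm : ∀ i j, g i j = g j i)
    (hgsm : ∀ i j, ContDiff ℝ (⊤ : ℕ∞) (g i j)) (hωsm : ∀ i, ContDiff ℝ (⊤ : ℕ∞) (ω i))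
    (hnd : ∀ (p v : Fin n → ℝ), (∑ l, ω l p * v l) = 0 →
      (∀ w : Fin n → ℝ, (∑ l, ω l p * w l) = 0 →
        (∑ i, ∑ j, g i j p * v i * w j) = 0) → v = 0)
    (p ξ : Fin n → ℝ) (hξ : (∑ l, ω l p * ξ l) ≠ 0) :
    ∃ ε > (0 : ℝ), ∃ x : ℝ → Fin n → ℝ,
      (ContDiffOn ℝ (⊤ : ℕ∞) x (Set.Ioo (-ε) ε) ∧ x 0 = p ∧ deriv x 0 = ξ ∧
        IsKropinaGeodesicOn g ω x (Set.Ioo (-ε) ε)) ∧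
      ∀ y : ℝ → Fin n → ℝ,
        (ContDiffOn ℝ (⊤ : ℕ∞) y (Set.Ioo (-ε) ε) ∧ y 0 = p ∧ deriv y 0 = ξ ∧
          IsKropinaGeodesicOn g ω y (Set.Ioo (-ε) ε)) →
        ∃ δ > (0 : ℝ), ∃ φ : ℝ → ℝ, φ 0 = 0 ∧ StrictMonoOn φ (Set.Ioo (-δ) δ) ∧
          ∀ t ∈ Set.Ioo (-δ) δ, y t = x (φ t) := by
  classical
  have hU := KU_open hωsm
  have hz0 : KB ω (p, ξ) ≠ 0 := hξ
  set f : (Fin n → ℝ) × (Fin n → ℝ) → (Fin n → ℝ) × (Fin n → ℝ) := fun z => (z.2, KG g ω z) with hf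
  have hfs : ContDiffOn ℝ (⊤ : ℕ∞) f {z | KB ω z ≠ 0} :=
    contDiff_snd.contDiffOn.prodMk (KG_contDiffOn hgsymm hgsm hωsm hnd)
  have hf1 : ContDiffAt ℝ 1 f (p, ξ) :=
    (hfs.contDiffAt (hU.mem_nhds hz0)).of_le (by exact_mod_cast le_top)
  obtain ⟨α, hα0, ε₀, hε₀, hα⟩ :=
    hf1.exists_forall_mem_closedBall_exists_eq_forall_mem_Ioo_hasDerivAt₀ 0
  simp only [zero_sub, zero_add] at hα
  have h00 : (0 : ℝ) ∈ Set.Ioo (-ε₀) ε₀ := ⟨by linarith, hε₀⟩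
  have hαc : ContinuousAt α 0 := (hα 0 h00).continuousAt
  have hαU : ∀ᶠ t in nhds (0:ℝ), t ∈ Set.Ioo (-ε₀) ε₀ ∧ KB ω (α t) ≠ 0 :=
    Filter.Eventually.and (isOpen_Ioo.mem_nhds h00)
      (hαc.eventually (by rw [hα0]; exact hU.mem_nhds hz0))
  obtain ⟨ε, hε, hball⟩ := Metric.eventually_nhds_iff_ball.1 hαU
  rw [Real.ball_eq_Ioo, zero_sub, zero_add] at hball
  have hα' : ∀ t ∈ Set.Ioo (-ε) ε, HasDerivAt α (f (α t)) t := fun t ht => hα t (hball t ht).1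
  have h0 : (0 : ℝ) ∈ Set.Ioo (-ε) ε := ⟨by linarith, hε⟩
  have hx' : ∀ t ∈ Set.Ioo (-ε) ε, HasDerivAt (fun t => (α t).1) (α t).2 t := fun t ht =>
    (hasFDerivAt_fst (𝕜 := ℝ) (p := α t)).comp_hasDerivAt t (hα' t ht)
  refine ⟨ε, hε, fun t => (α t).1, ⟨?_, by simp [hα0], ?_, ?_⟩, ?_⟩
  · exact contDiff_fst.comp_contDiffOn
      (ode_smooth isOpen_Ioo hfs hα' fun t ht => (hball t ht).2)
  · rw [(hx' 0 h0).deriv, hα0]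
  · intro t ht
    rw [(hx' t ht).deriv]
    refine ⟨(hball t ht).2, fun k => ?_⟩
    have h1 : HasFDerivAt (KP g ω) (fderiv ℝ (KP g ω) (α t)) (α t) :=
      (KP_diffAt hgsm hωsm (hball t ht).2).hasFDerivAt
    have h2 := hasDerivAt_pi.1 (h1.comp_hasDerivAt t (hα' t ht)) k
    have h3 : fderiv ℝ (KP g ω) (α t) (f (α t)) = KQ g ω (α t) :=
      KG_spec hgsymm hgsm hωsm hnd (α t) (hball t ht).2
    rw [h3] at h2
    refine h2.congr_of_eventuallyEq ?_
    filter_upwards [isOpen_Ioo.mem_nhds ht] with u hu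
    rw [(hx' u hu).deriv]
    rfl
  · rintro y ⟨hys, hy0, hdy0, hgeo⟩
    set lam : ℝ → ℝ := fun t => Fden ω (y t) (deriv y t) / KB ω (p, ξ) with hlam
    set β : ℝ → (Fin n → ℝ) × (Fin n → ℝ) := fun t => (y t, (lam t)⁻¹ • deriv y t) with hβ
    obtain ⟨hlc, hβd⟩ := geod_spray hgsymm hgsm hωsm hnd isOpen_Ioo hys hgeo hz0 hlam hβ
    obtain ⟨φ, hφ0, hφ⟩ := prim_exists hlc
    have hl0 : lam 0 = 1 := by
      simp only [hlam, hy0, hdy0]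
      exact div_self hz0
    have hβ0 : β 0 = (p, ξ) := by
      simp only [hβ, hl0, hy0, hdy0, inv_one, one_smul]
    obtain ⟨K, s, hs, hlip⟩ := hf1.exists_lipschitzOnWith
    have hI : Set.Ioo (-ε) ε ∈ nhds (0:ℝ) := isOpen_Ioo.mem_nhds h0
    have hφc : ContinuousAt φ 0 := (hφ 0 h0).continuousAt
    have hev : ∀ᶠ t in nhds (0:ℝ), t ∈ Set.Ioo (-ε) ε ∧ φ t ∈ Set.Ioo (-ε) ε ∧ β t ∈ s ∧
        α (φ t) ∈ s ∧ lam t ∈ Set.Ioo (0:ℝ) 2 := by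
      have c1 : ∀ᶠ t in nhds (0:ℝ), φ t ∈ Set.Ioo (-ε) ε :=
        hφc.eventually (by rw [hφ0]; exact hI)
      have c2 : ∀ᶠ t in nhds (0:ℝ), β t ∈ s :=
        (hβd 0 h0).continuousAt.eventually (by rw [hβ0]; exact hs)
      have c3 : ∀ᶠ t in nhds (0:ℝ), α (φ t) ∈ s := by
        have : ContinuousAt (fun t => α (φ t)) 0 :=
          ContinuousAt.comp (by rw [hφ0]; exact hαc) hφc
        exact this.eventually (by simp only [hφ0, hα0]; exact hs)
      have c4 : ∀ᶠ t in nhds (0:ℝ), lam t ∈ Set.Ioo (0:ℝ) 2 :=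
        (hlc.continuousAt hI).eventually
          (by rw [hl0]; exact isOpen_Ioo.mem_nhds ⟨by norm_num, by norm_num⟩)
      filter_upwards [hI, c1, c2, c3, c4] with t a1 a2 a3 a4 a5 using ⟨a1, a2, a3, a4, a5⟩
    obtain ⟨δ, hδ, hb⟩ := Metric.eventually_nhds_iff_ball.1 hev
    rw [Real.ball_eq_Ioo, zero_sub, zero_add] at hb
    refine ⟨δ, hδ, φ, hφ0, ?_, ?_⟩
    · refine strictMonoOn_of_deriv_pos (convex_Ioo _ _)
        (fun t ht => (hφ t (hb t ht).1).continuousAt.continuousWithinAt) fun t ht => ?_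
      rw [interior_Ioo] at ht
      rw [(hφ t (hb t ht).1).deriv]
      exact (hb t ht).2.2.2.2.1
    · have key : Set.EqOn β (fun t => α (φ t)) (Set.Ioo (-δ) δ) := by
        refine ODE_solution_unique_of_mem_Ioo (v := fun t z => lam t • f z) (s := fun _ => s)
          (K := 2 * K) (t₀ := 0) ?_ ⟨by linarith, hδ⟩ ?_ ?_ ?_
        · intro t ht
          obtain ⟨l1, l2⟩ := (hb t ht).2.2.2.2
          refine LipschitzOnWith.of_dist_le_mul fun a ha b hb' => ?_
          have h1 := hlip.dist_le_mul a ha b hb'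
          rw [dist_smul₀, Real.norm_eq_abs, abs_of_pos l1]
          push_cast
          have h2 : 0 ≤ dist (f a) (f b) := dist_nonneg
          nlinarith
        · intro t ht
          exact ⟨hβd t (hb t ht).1, (hb t ht).2.2.1⟩
        · intro t ht
          exact ⟨(hα' _ (hb t ht).2.1).scomp t (hφ t (hb t ht).1), (hb t ht).2.2.2.1⟩
        · simp only [hβ0, hφ0, hα0]
      intro t ht
      exact congrArg Prod.fst (key ht)
end

section
/- Let F = g/ω be a Kropina metric and F̂ = ĝ/ω another Kropina metric with the same 1-form, with ĝ = αg + β·ω (symmetrized) for a smooth function α and a 1-form β. If F and F̂ have the same geodesics (are projectively equivalent) and ker ω is a non-integrable distribution (ω∧dω ≠ 0 on a dense set), then α is constant and β is closed, i.e., F̂ = cF + β with c constant and dβ = 0. -/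
open scoped BigOperators

theorem ode_boot {E : Type*} [NormedAddCommGroup E] [NormedSpace ℝ E]
    (W : E → E) (U : Set E) (hW : ContDiffOn ℝ (⊤ : ℕ∞) W U) (γ : ℝ → E) (s : Set ℝ) (hs : IsOpen s)
    (hγ : ∀ t ∈ s, HasDerivAt γ (W (γ t)) t) (hU : ∀ t ∈ s, γ t ∈ U) : ContDiffOn ℝ (⊤ : ℕ∞) γ s := by
  rw [contDiffOn_infty]
  intro n
  induction n with
  | zero =>
    exact contDiffOn_zero.2 fun t ht => (hγ t ht).continuousAt.continuousWithinAt
  | succ n ih =>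
    push_cast
    rw [contDiffOn_succ_iff_deriv_of_isOpen hs]
    refine ⟨fun t ht => (hγ t ht).differentiableAt.differentiableWithinAt, by simp, ?_⟩
    have : ContDiffOn ℝ n (fun t => W (γ t)) s :=
      (hW.of_le (by exact_mod_cast le_top)).comp ih hU
    exact this.congr fun t ht => (hγ t ht).deriv

theorem ode_ex {E : Type*} [NormedAddCommGroup E] [NormedSpace ℝ E] [CompleteSpace E]
    (W : E → E) (U : Set E) (hUo : IsOpen U) (hW : ContDiffOn ℝ (⊤ : ℕ∞) W U) (z : E) (hz : z ∈ U) :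
    ∃ (γ : ℝ → E) (s : Set ℝ), IsOpen s ∧ (0:ℝ) ∈ s ∧ γ 0 = z ∧ ContDiffOn ℝ (⊤ : ℕ∞) γ s ∧
      ∀ t ∈ s, HasDerivAt γ (W (γ t)) t ∧ γ t ∈ U := by
  have h1 : ContDiffAt ℝ 1 W z :=
    ((hW z hz).contDiffAt (hUo.mem_nhds hz)).of_le (by exact_mod_cast le_top)
  obtain ⟨γ, h0, ε, hε, h⟩ := h1.exists_forall_mem_closedBall_exists_eq_forall_mem_Ioo_hasDerivAt₀ 0
  have hc : ContinuousOn γ (Set.Ioo (0-ε) (0+ε)) :=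
    fun t ht => (h t ht).continuousAt.continuousWithinAt
  have ho := hc.isOpen_inter_preimage isOpen_Ioo hUo
  refine ⟨γ, _, ho, ⟨by simp [hε], by simpa [h0] using hz⟩, h0, ?_, fun t ht => ⟨h t ht.1, ht.2⟩⟩
  exact ode_boot W U hW γ _ ho (fun t ht => h t ht.1) (fun t ht => ht.2)

theorem det_sm {X : Type*} [NormedAddCommGroup X] [NormedSpace ℝ X] {n : ℕ}
    (M : X → Matrix (Fin n) (Fin n) ℝ) (z : X)
    (h : ∀ i j, ContDiffAt ℝ (⊤ : ℕ∞) (fun x => M x i j) z) : ContDiffAt ℝ (⊤ : ℕ∞) (fun x => (M x).det) z := by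
  simp only [Matrix.det_apply']
  exact ContDiffAt.sum fun σ _ => contDiffAt_const.mul (contDiffAt_prod fun i _ => h _ _)

theorem inv_sm {X : Type*} [NormedAddCommGroup X] [NormedSpace ℝ X] {n : ℕ}
    (M : X → Matrix (Fin n) (Fin n) ℝ) (z : X) (hz : (M z).det ≠ 0)
    (h : ∀ i j, ContDiffAt ℝ (⊤ : ℕ∞) (fun x => M x i j) z) (i j : Fin n) :
    ContDiffAt ℝ (⊤ : ℕ∞) (fun x => (M x)⁻¹ i j) z := by
  simp only [Matrix.inv_def, Matrix.smul_apply, Ring.inverse_eq_inv', smul_eq_mul,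
    Matrix.adjugate_apply]
  refine ((det_sm M z h).inv hz).mul (det_sm _ z ?_)
  intro a b
  simp only [Matrix.updateRow_apply]
  split_ifs
  · exact contDiffAt_const
  · exact h a b

noncomputable def kRow {n : ℕ} (g : Fin n → Fin n → (Fin n → ℝ) → ℝ) (p ξ : Fin n → ℝ)
    (k : Fin n) : ℝ := ∑ j, g k j p * ξ j

noncomputable def kBl {n : ℕ} (g : Fin n → Fin n → (Fin n → ℝ) → ℝ) (p v w : Fin n → ℝ) : ℝ :=
  ∑ i, ∑ j, g i j p * v i * w j

/-- directional derivative via partial derivatives -/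
noncomputable def kD {n : ℕ} (f : (Fin n → ℝ) → ℝ) (p ξ : Fin n → ℝ) : ℝ :=
  ∑ m, pd f p m * ξ m

noncomputable def kA {n : ℕ} (g : Fin n → Fin n → (Fin n → ℝ) → ℝ)
    (ω : Fin n → (Fin n → ℝ) → ℝ) (p ξ : Fin n → ℝ) (k j : Fin n) : ℝ :=
  -2 * ((Fden ω p ξ)⁻¹) ^ 2 * ω j p * kRow g p ξ k + 2 * (Fden ω p ξ)⁻¹ * g k j p
  + 2 * ((Fden ω p ξ)⁻¹) ^ 3 * ω j p * ω k p * Fnum g p ξ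
  - 2 * ((Fden ω p ξ)⁻¹) ^ 2 * ω k p * kRow g p ξ j

noncomputable def kB {n : ℕ} (g : Fin n → Fin n → (Fin n → ℝ) → ℝ)
    (ω : Fin n → (Fin n → ℝ) → ℝ) (p ξ : Fin n → ℝ) (k : Fin n) : ℝ :=
  -2 * ((Fden ω p ξ)⁻¹) ^ 2 * (∑ l, kD (ω l) p ξ * ξ l) * kRow g p ξ k
  + 2 * (Fden ω p ξ)⁻¹ * (∑ j, kD (g k j) p ξ * ξ j)
  + 2 * ((Fden ω p ξ)⁻¹) ^ 3 * (∑ l, kD (ω l) p ξ * ξ l) * ω k p * Fnum g p ξ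
  - ((Fden ω p ξ)⁻¹) ^ 2 * kD (ω k) p ξ * Fnum g p ξ
  - ((Fden ω p ξ)⁻¹) ^ 2 * ω k p * (∑ i, ∑ j, kD (g i j) p ξ * ξ i * ξ j)

theorem kBl_row {n : ℕ} (g : Fin n → Fin n → (Fin n → ℝ) → ℝ) (p v w : Fin n → ℝ) :
    ∑ k, v k * kRow g p w k = kBl g p v w := by
  simp only [kRow, kBl, Finset.mul_sum]
  exact Finset.sum_congr rfl fun i _ => Finset.sum_congr rfl fun j _ => by ring

theorem kBl_symm {n : ℕ} (g : Fin n → Fin n → (Fin n → ℝ) → ℝ) (hs : ∀ i j, g i j = g j i)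
    (p v w : Fin n → ℝ) : kBl g p v w = kBl g p w v := by
  simp only [kBl]
  rw [Finset.sum_comm]
  exact Finset.sum_congr rfl fun i _ => Finset.sum_congr rfl fun j _ => by rw [hs]; ring

theorem kA_apply {n : ℕ} (g : Fin n → Fin n → (Fin n → ℝ) → ℝ)
    (ω : Fin n → (Fin n → ℝ) → ℝ) (p ξ η : Fin n → ℝ) (k : Fin n) :
    ∑ j, kA g ω p ξ k j * η j =
      -2 * ((Fden ω p ξ)⁻¹) ^ 2 * Fden ω p η * kRow g p ξ k
      + 2 * (Fden ω p ξ)⁻¹ * kRow g p η k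
      + 2 * ((Fden ω p ξ)⁻¹) ^ 3 * Fden ω p η * ω k p * Fnum g p ξ
      - 2 * ((Fden ω p ξ)⁻¹) ^ 2 * ω k p * kBl g p η ξ := by
  have h : ∀ j, kA g ω p ξ k j * η j =
      (-2 * ((Fden ω p ξ)⁻¹) ^ 2 * kRow g p ξ k) * (ω j p * η j)
      + (2 * (Fden ω p ξ)⁻¹) * (g k j p * η j)
      + (2 * ((Fden ω p ξ)⁻¹) ^ 3 * ω k p * Fnum g p ξ) * (ω j p * η j)
      - (2 * ((Fden ω p ξ)⁻¹) ^ 2 * ω k p) * (η j * kRow g p ξ j) := by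
    intro j; unfold kA; ring
  simp_rw [h, Finset.sum_sub_distrib, Finset.sum_add_distrib, ← Finset.mul_sum, kBl_row]
  rw [← Fden, ← kRow]; ring

theorem kA_contract {n : ℕ} (g : Fin n → Fin n → (Fin n → ℝ) → ℝ)
    (ω : Fin n → (Fin n → ℝ) → ℝ) (p ξ η w : Fin n → ℝ) :
    ∑ k, w k * ∑ j, kA g ω p ξ k j * η j =
      -2 * ((Fden ω p ξ)⁻¹) ^ 2 * Fden ω p η * kBl g p w ξ
      + 2 * (Fden ω p ξ)⁻¹ * kBl g p w η
      + 2 * ((Fden ω p ξ)⁻¹) ^ 3 * Fden ω p η * Fden ω p w * Fnum g p ξ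
      - 2 * ((Fden ω p ξ)⁻¹) ^ 2 * Fden ω p w * kBl g p η ξ := by
  have h : ∀ k, w k * ∑ j, kA g ω p ξ k j * η j =
      (-2 * ((Fden ω p ξ)⁻¹) ^ 2 * Fden ω p η) * (w k * kRow g p ξ k)
      + (2 * (Fden ω p ξ)⁻¹) * (w k * kRow g p η k)
      + (2 * ((Fden ω p ξ)⁻¹) ^ 3 * Fden ω p η * Fnum g p ξ) * (ω k p * w k)
      - (2 * ((Fden ω p ξ)⁻¹) ^ 2 * kBl g p η ξ) * (ω k p * w k) := by
    intro k; rw [kA_apply]; ring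
  simp_rw [h, Finset.sum_sub_distrib, Finset.sum_add_distrib, ← Finset.mul_sum, kBl_row]
  rw [← Fden]; ring

theorem kFx_contract {n : ℕ} (g : Fin n → Fin n → (Fin n → ℝ) → ℝ)
    (ω : Fin n → (Fin n → ℝ) → ℝ) (p ξ : Fin n → ℝ) :
    ∑ k, ξ k * Fx g ω k p ξ = (Fden ω p ξ)⁻¹ * (∑ i, ∑ j, kD (g i j) p ξ * ξ i * ξ j)
    - ((Fden ω p ξ)⁻¹) ^ 2 * (∑ l, kD (ω l) p ξ * ξ l) * Fnum g p ξ := by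
  have h1 : ∑ k, ξ k * (∑ i, ∑ j, pd (g i j) p k * ξ i * ξ j)
      = ∑ i, ∑ j, kD (g i j) p ξ * ξ i * ξ j := by
    simp only [kD, Finset.mul_sum, Finset.sum_mul]
    rw [Finset.sum_comm]
    refine Finset.sum_congr rfl fun i _ => ?_
    rw [Finset.sum_comm]
    exact Finset.sum_congr rfl fun j _ => Finset.sum_congr rfl fun k _ => by ring
  have h2 : ∑ k, ξ k * (∑ l, pd (ω l) p k * ξ l) = ∑ l, kD (ω l) p ξ * ξ l := by
    simp only [kD, Finset.mul_sum, Finset.sum_mul]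
    rw [Finset.sum_comm]
    exact Finset.sum_congr rfl fun j _ => Finset.sum_congr rfl fun k _ => by ring
  rw [← h1, ← h2]
  have h : ∀ k, ξ k * Fx g ω k p ξ =
      (Fden ω p ξ)⁻¹ * (ξ k * (∑ i, ∑ j, pd (g i j) p k * ξ i * ξ j))
      - (((Fden ω p ξ)⁻¹) ^ 2 * Fnum g p ξ) * (ξ k * (∑ l, pd (ω l) p k * ξ l)) := by
    intro k; unfold Fx; ring
  simp_rw [h, Finset.sum_sub_distrib, ← Finset.mul_sum]
  ring

theorem kB_contract {n : ℕ} (g : Fin n → Fin n → (Fin n → ℝ) → ℝ)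
    (ω : Fin n → (Fin n → ℝ) → ℝ) (p ξ : Fin n → ℝ) (hD : Fden ω p ξ ≠ 0) :
    ∑ k, ξ k * kB g ω p ξ k = ∑ k, ξ k * Fx g ω k p ξ := by
  rw [kFx_contract]
  have h1 : ∑ k, ξ k * (∑ j, kD (g k j) p ξ * ξ j) = ∑ i, ∑ j, kD (g i j) p ξ * ξ i * ξ j := by
    simp only [Finset.mul_sum]
    exact Finset.sum_congr rfl fun j _ => Finset.sum_congr rfl fun k _ => by ring
  set L := ∑ l, kD (ω l) p ξ * ξ l with hL
  set Q := ∑ i, ∑ j, kD (g i j) p ξ * ξ i * ξ j with hQ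
  have h : ∀ k, ξ k * kB g ω p ξ k =
      (-2 * ((Fden ω p ξ)⁻¹) ^ 2 * L) * (ξ k * kRow g p ξ k)
      + (2 * (Fden ω p ξ)⁻¹) * (ξ k * (∑ j, kD (g k j) p ξ * ξ j))
      + (2 * ((Fden ω p ξ)⁻¹) ^ 3 * L * Fnum g p ξ) * (ω k p * ξ k)
      - (((Fden ω p ξ)⁻¹) ^ 2 * Fnum g p ξ) * (kD (ω k) p ξ * ξ k)
      - (((Fden ω p ξ)⁻¹) ^ 2 * Q) * (ω k p * ξ k) := by
    intro k; unfold kB; rw [← hL, ← hQ]; ring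
  simp_rw [h, Finset.sum_sub_distrib, Finset.sum_add_distrib, ← Finset.mul_sum, kBl_row, h1, ← hL]
  have h3 : kBl g p ξ ξ = Fnum g p ξ := rfl
  rw [← Fden, h3]
  field_simp
  ring

/-- the regularised Hessian matrix -/
noncomputable def kM {n : ℕ} (g : Fin n → Fin n → (Fin n → ℝ) → ℝ)
    (ω : Fin n → (Fin n → ℝ) → ℝ) (z : (Fin n → ℝ) × (Fin n → ℝ)) : Matrix (Fin n) (Fin n) ℝ :=
  Matrix.of fun k j => kA g ω z.1 z.2 k j + ω k z.1 * ω j z.1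

theorem kM_mulVec {n : ℕ} (g : Fin n → Fin n → (Fin n → ℝ) → ℝ)
    (ω : Fin n → (Fin n → ℝ) → ℝ) (p ξ η : Fin n → ℝ) (k : Fin n) :
    (kM g ω (p, ξ)).mulVec η k = ∑ j, kA g ω p ξ k j * η j + ω k p * Fden ω p η := by
  simp only [kM, Matrix.mulVec, dotProduct, Matrix.of_apply, add_mul, Finset.sum_add_distrib, Fden,
    Finset.mul_sum, mul_assoc]

theorem kM_contract {n : ℕ} (g : Fin n → Fin n → (Fin n → ℝ) → ℝ)
    (hs : ∀ i j, g i j = g j i)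
    (ω : Fin n → (Fin n → ℝ) → ℝ) (p ξ η : Fin n → ℝ) (hD : Fden ω p ξ ≠ 0) :
    ∑ k, ξ k * (kM g ω (p, ξ)).mulVec η k = Fden ω p ξ * Fden ω p η := by
  have h : ∀ k, ξ k * (kM g ω (p, ξ)).mulVec η k =
    ξ k * ∑ j, kA g ω p ξ k j * η j + (ω k p * ξ k) * Fden ω p η := by
    intro k; rw [kM_mulVec]; ring
  simp_rw [h, Finset.sum_add_distrib, kA_contract, ← Finset.sum_mul]
  rw [← Fden, kBl_symm g hs p η ξ]
  have h3 : kBl g p ξ ξ = Fnum g p ξ := rfl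
  rw [h3]
  field_simp
  ring

theorem kM_det {n : ℕ} (g : Fin n → Fin n → (Fin n → ℝ) → ℝ)
    (hs : ∀ i j, g i j = g j i)
    (ω : Fin n → (Fin n → ℝ) → ℝ)
    (hnd : ∀ (p v : Fin n → ℝ), (∑ l, ω l p * v l) = 0 →
      (∀ w : Fin n → ℝ, (∑ l, ω l p * w l) = 0 →
        (∑ i, ∑ j, g i j p * v i * w j) = 0) → v = 0)
    (p ξ : Fin n → ℝ) (hD : Fden ω p ξ ≠ 0) : (kM g ω (p, ξ)).det ≠ 0 := by
  intro h0
  obtain ⟨v, hv, hv0⟩ := Matrix.exists_mulVec_eq_zero_iff.2 h0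
  apply hv
  have h1 := kM_contract g hs ω p ξ v hD
  rw [hv0] at h1
  simp only [Pi.zero_apply, mul_zero, Finset.sum_const_zero] at h1
  have h2 : Fden ω p v = 0 := by
    rcases mul_eq_zero.1 h1.symm with h | h
    · exact absurd h hD
    · exact h
  refine hnd p v h2 fun w hw => ?_
  have hw' : Fden ω p w = 0 := hw
  have h3 := kA_contract g ω p ξ v w
  have h4 : ∀ k, ∑ j, kA g ω p ξ k j * v j = 0 := by
    intro k
    have := kM_mulVec g ω p ξ v k
    rw [hv0, h2] at this
    simpa using this.symm
  simp only [h4, h2, hw', mul_zero, zero_mul, Finset.sum_const_zero, zero_add, sub_zero,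
    add_zero] at h3
  have h5 : kBl g p w v = 0 := by
    have hi := inv_ne_zero hD
    rcases mul_eq_zero.1 h3.symm with h | h
    · simp [hi] at h
    · exact h
  rw [kBl_symm g hs] at h5
  exact h5

/-- the acceleration -/
noncomputable def kV {n : ℕ} (g : Fin n → Fin n → (Fin n → ℝ) → ℝ)
    (ω : Fin n → (Fin n → ℝ) → ℝ) (z : (Fin n → ℝ) × (Fin n → ℝ)) : Fin n → ℝ :=
  (kM g ω z)⁻¹.mulVec fun k => Fx g ω k z.1 z.2 - kB g ω z.1 z.2 k

theorem kV_eq {n : ℕ} (g : Fin n → Fin n → (Fin n → ℝ) → ℝ)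
    (hs : ∀ i j, g i j = g j i)
    (ω : Fin n → (Fin n → ℝ) → ℝ)
    (hnd : ∀ (p v : Fin n → ℝ), (∑ l, ω l p * v l) = 0 →
      (∀ w : Fin n → ℝ, (∑ l, ω l p * w l) = 0 →
        (∑ i, ∑ j, g i j p * v i * w j) = 0) → v = 0)
    (p ξ : Fin n → ℝ) (hD : Fden ω p ξ ≠ 0) (k : Fin n) :
    kB g ω p ξ k + ∑ j, kA g ω p ξ k j * kV g ω (p, ξ) j = Fx g ω k p ξ := by
  have hdet := kM_det g hs ω hnd p ξ hD
  have h1 : (kM g ω (p, ξ)).mulVec (kV g ω (p, ξ)) =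
      fun k => Fx g ω k p ξ - kB g ω p ξ k := by
    rw [kV, Matrix.mulVec_mulVec, Matrix.mul_nonsing_inv _ (isUnit_iff_ne_zero.2 hdet),
      Matrix.one_mulVec]
  have h2 := kM_contract g hs ω p ξ (kV g ω (p, ξ)) hD
  rw [h1] at h2
  simp only [mul_sub, Finset.sum_sub_distrib, kB_contract g ω p ξ hD, sub_self] at h2
  have h3 : Fden ω p (kV g ω (p, ξ)) = 0 := by
    rcases mul_eq_zero.1 h2.symm with h | h
    · exact absurd h hD
    · exact h
  have h4 := kM_mulVec g ω p ξ (kV g ω (p, ξ)) k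
  rw [h1, h3] at h4
  simp only at h4
  linarith

theorem pd_sm {n : ℕ} (f : (Fin n → ℝ) → ℝ) (hf : ContDiff ℝ (⊤ : ℕ∞) f) (k : Fin n) :
    ContDiff ℝ (⊤ : ℕ∞) (fun p => pd f p k) := by
  unfold pd
  exact (hf.fderiv_right (m := ((⊤ : ℕ∞) : WithTop ℕ∞)) (by simp)).clm_apply contDiff_const

theorem kV_sm {n : ℕ} (g : Fin n → Fin n → (Fin n → ℝ) → ℝ)
    (hs : ∀ i j, g i j = g j i)
    (ω : Fin n → (Fin n → ℝ) → ℝ)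
    (hgsm : ∀ i j, ContDiff ℝ (⊤ : ℕ∞) (g i j)) (hωsm : ∀ i, ContDiff ℝ (⊤ : ℕ∞) (ω i))
    (hnd : ∀ (p v : Fin n → ℝ), (∑ l, ω l p * v l) = 0 →
      (∀ w : Fin n → ℝ, (∑ l, ω l p * w l) = 0 →
        (∑ i, ∑ j, g i j p * v i * w j) = 0) → v = 0)
    (z : (Fin n → ℝ) × (Fin n → ℝ)) (hD : Fden ω z.1 z.2 ≠ 0) :
    ContDiffAt ℝ (⊤ : ℕ∞) (kV g ω) z := by
  have hco : ∀ i, ContDiffAt ℝ (⊤ : ℕ∞) (fun z : (Fin n → ℝ) × (Fin n → ℝ) => z.2 i) z := by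
    intro i; fun_prop
  have hg : ∀ i j, ContDiffAt ℝ (⊤ : ℕ∞) (fun z : (Fin n → ℝ) × (Fin n → ℝ) => g i j z.1) z :=
    fun i j => ((hgsm i j).comp contDiff_fst).contDiffAt
  have hω : ∀ i, ContDiffAt ℝ (⊤ : ℕ∞) (fun z : (Fin n → ℝ) × (Fin n → ℝ) => ω i z.1) z :=
    fun i => ((hωsm i).comp contDiff_fst).contDiffAt
  have hpg : ∀ i j k, ContDiffAt ℝ (⊤ : ℕ∞)
      (fun z : (Fin n → ℝ) × (Fin n → ℝ) => pd (g i j) z.1 k) z :=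
    fun i j k => ((pd_sm _ (hgsm i j) k).comp contDiff_fst).contDiffAt
  have hpω : ∀ i k, ContDiffAt ℝ (⊤ : ℕ∞)
      (fun z : (Fin n → ℝ) × (Fin n → ℝ) => pd (ω i) z.1 k) z :=
    fun i k => ((pd_sm _ (hωsm i) k).comp contDiff_fst).contDiffAt
  have hDs : ContDiffAt ℝ (⊤ : ℕ∞)
      (fun z : (Fin n → ℝ) × (Fin n → ℝ) => Fden ω z.1 z.2) z := by
    unfold Fden; fun_prop
  have hDi := hDs.inv hD
  have hN : ContDiffAt ℝ (⊤ : ℕ∞)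
      (fun z : (Fin n → ℝ) × (Fin n → ℝ) => Fnum g z.1 z.2) z := by
    unfold Fnum; fun_prop
  have hR : ∀ k, ContDiffAt ℝ (⊤ : ℕ∞)
      (fun z : (Fin n → ℝ) × (Fin n → ℝ) => kRow g z.1 z.2 k) z := by
    intro k; unfold kRow; fun_prop
  have hkg : ∀ i j, ContDiffAt ℝ (⊤ : ℕ∞)
      (fun z : (Fin n → ℝ) × (Fin n → ℝ) => kD (g i j) z.1 z.2) z := by
    intro i j; unfold kD; fun_prop
  have hkω : ∀ i, ContDiffAt ℝ (⊤ : ℕ∞)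
      (fun z : (Fin n → ℝ) × (Fin n → ℝ) => kD (ω i) z.1 z.2) z := by
    intro i; unfold kD; fun_prop
  have hM : ∀ i j, ContDiffAt ℝ (⊤ : ℕ∞) (fun z => kM g ω z i j) z := by
    intro i j
    simp only [kM, Matrix.of_apply, kA]
    fun_prop
  have hF : ∀ k, ContDiffAt ℝ (⊤ : ℕ∞)
      (fun z : (Fin n → ℝ) × (Fin n → ℝ) => Fx g ω k z.1 z.2) z := by
    intro k; unfold Fx; fun_prop
  have hB : ∀ k, ContDiffAt ℝ (⊤ : ℕ∞)
      (fun z : (Fin n → ℝ) × (Fin n → ℝ) => kB g ω z.1 z.2 k) z := by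
    intro k; unfold kB; fun_prop
  have hI := inv_sm (kM g ω) z (kM_det g hs ω hnd z.1 z.2 hD) hM
  rw [contDiffAt_pi]
  intro k
  simp only [kV, Matrix.mulVec, dotProduct]
  exact ContDiffAt.sum fun j _ => (hI k j).mul ((hF j).sub (hB j))

theorem pd_sum {n : ℕ} (f : (Fin n → ℝ) → ℝ) (p ξ : Fin n → ℝ) :
    fderiv ℝ f p ξ = kD f p ξ := by
  unfold kD pd
  conv_lhs => rw [pi_eq_sum_univ' ξ]
  simp only [map_sum, map_smul, smul_eq_mul]
  exact Finset.sum_congr rfl fun j _ => by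
    rw [mul_comm]

theorem along {n : ℕ} (f : (Fin n → ℝ) → ℝ) (hf : ContDiff ℝ (⊤ : ℕ∞) f)
    (x : ℝ → Fin n → ℝ) (ξ : Fin n → ℝ) (t : ℝ) (hx : HasDerivAt x ξ t) :
    HasDerivAt (fun u => f (x u)) (kD f (x t) ξ) t := by
  rw [← pd_sum]
  exact ((hf.differentiable (by simp)).differentiableAt.hasFDerivAt).comp_hasDerivAt t hx

theorem Fxi_deriv {n : ℕ} (g : Fin n → Fin n → (Fin n → ℝ) → ℝ)
    (hs : ∀ i j, g i j = g j i)
    (ω : Fin n → (Fin n → ℝ) → ℝ)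
    (hgsm : ∀ i j, ContDiff ℝ (⊤ : ℕ∞) (g i j)) (hωsm : ∀ i, ContDiff ℝ (⊤ : ℕ∞) (ω i))
    (x y : ℝ → Fin n → ℝ) (η : Fin n → ℝ) (t : ℝ) (hx : HasDerivAt x (y t) t)
    (hy : HasDerivAt y η t) (hD : Fden ω (x t) (y t) ≠ 0) (k : Fin n) :
    HasDerivAt (fun u => Fxi g ω k (x u) (y u))
      (kB g ω (x t) (y t) k + ∑ j, kA g ω (x t) (y t) k j * η j) t := by
  have hg := fun i j => along (g i j) (hgsm i j) x (y t) t hx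
  have hw := fun i => along (ω i) (hωsm i) x (y t) t hx
  have hyi : ∀ i, HasDerivAt (fun u => y u i) (η i) t := hasDerivAt_pi.1 hy
  have h1 : HasDerivAt (fun u => Fden ω (x u) (y u))
      ((∑ l, kD (ω l) (x t) (y t) * y t l) + Fden ω (x t) η) t := by
    unfold Fden
    rw [← Finset.sum_add_distrib]
    exact HasDerivAt.fun_sum fun l _ => (hw l).mul (hyi l)
  have h2 : HasDerivAt (fun u => ∑ j, g k j (x u) * y u j)
      ((∑ j, kD (g k j) (x t) (y t) * y t j) + kRow g (x t) η k) t := by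
    unfold kRow
    rw [← Finset.sum_add_distrib]
    exact HasDerivAt.fun_sum fun l _ => (hg k l).mul (hyi l)
  have h3 : HasDerivAt (fun u => Fnum g (x u) (y u))
      ((∑ i, ∑ j, kD (g i j) (x t) (y t) * y t i * y t j) + 2 * kBl g (x t) η (y t)) t := by
    have e : (∑ i, ∑ j, kD (g i j) (x t) (y t) * y t i * y t j) + 2 * kBl g (x t) η (y t)
       = ∑ i, ∑ j, ((kD (g i j) (x t) (y t) * y t i + g i j (x t) * η i) * y t j
          + g i j (x t) * y t i * η j) := by
      rw [two_mul]
      nth_rewrite 2 [kBl_symm g hs]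
      simp only [kBl, ← Finset.sum_add_distrib]
      exact Finset.sum_congr rfl fun j _ => Finset.sum_congr rfl fun k _ => by ring
    rw [e]
    unfold Fnum
    exact HasDerivAt.fun_sum fun i _ => HasDerivAt.fun_sum fun j _ =>
      ((hg i j).mul (hyi i)).mul (hyi j)
  have h4 := h1.fun_inv hD
  unfold Fxi
  have := (((h4.const_mul 2).mul h2).sub (((h4.pow 2).mul (hw k)).mul h3))
  refine this.congr_deriv ?_
  rw [kA_apply]
  unfold kB
  simp only [Pi.pow_apply, Pi.mul_apply, Nat.cast_ofNat, Nat.reduceSub, pow_one]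
  rw [show (∑ j, g k j (x t) * y t j) = kRow g (x t) (y t) k from rfl]
  field_simp
  ring

theorem geo_ex {n : ℕ} (g : Fin n → Fin n → (Fin n → ℝ) → ℝ)
    (hs : ∀ i j, g i j = g j i)
    (ω : Fin n → (Fin n → ℝ) → ℝ)
    (hgsm : ∀ i j, ContDiff ℝ (⊤ : ℕ∞) (g i j)) (hωsm : ∀ i, ContDiff ℝ (⊤ : ℕ∞) (ω i))
    (hnd : ∀ (p v : Fin n → ℝ), (∑ l, ω l p * v l) = 0 →
      (∀ w : Fin n → ℝ, (∑ l, ω l p * w l) = 0 →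
        (∑ i, ∑ j, g i j p * v i * w j) = 0) → v = 0)
    (p ξ : Fin n → ℝ) (hD : Fden ω p ξ ≠ 0) :
    ∃ (x : ℝ → Fin n → ℝ) (s : Set ℝ), IsOpen s ∧ (0 : ℝ) ∈ s ∧ ContDiffOn ℝ (⊤ : ℕ∞) x s ∧
      x 0 = p ∧ HasDerivAt x ξ 0 ∧ IsKropinaGeodesicOn g ω x s := by
  have hDc : Continuous (fun z : (Fin n → ℝ) × (Fin n → ℝ) => Fden ω z.1 z.2) := by
    have := fun i => (hωsm i).continuous
    unfold Fden; fun_prop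
  obtain ⟨γ, s, hso, h0, hγ0, hγs, hγ⟩ := ode_ex
    (fun z : (Fin n → ℝ) × (Fin n → ℝ) => (z.2, kV g ω z)) {z | Fden ω z.1 z.2 ≠ 0}
    (isOpen_ne_fun hDc continuous_const)
    (fun z hz => (contDiffAt_snd.prodMk (kV_sm g hs ω hgsm hωsm hnd z hz)).contDiffWithinAt)
    (p, ξ) hD
  have hx : ∀ t ∈ s, HasDerivAt (fun u => (γ u).1) (γ t).2 t := fun t ht =>
    (hγ t ht).1.fst
  have hy : ∀ t ∈ s, HasDerivAt (fun u => (γ u).2) (kV g ω (γ t)) t := fun t ht =>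
    (hγ t ht).1.snd
  refine ⟨fun u => (γ u).1, s, hso, h0, contDiff_fst.comp_contDiffOn hγs, by simp [hγ0], ?_, ?_⟩
  · have := hx 0 h0
    rwa [hγ0] at this
  · intro t ht
    rw [(hx t ht).deriv]
    refine ⟨(hγ t ht).2, fun k => ?_⟩
    have h := Fxi_deriv g hs ω hgsm hωsm (fun u => (γ u).1) (fun u => (γ u).2) _ t (hx t ht)
      (hy t ht) (hγ t ht).2 k
    rw [show γ t = ((γ t).1, (γ t).2) from rfl] at h
    simp only [kV_eq g hs ω hnd _ _ (hγ t ht).2 k] at h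
    refine h.congr_of_eventuallyEq ?_
    filter_upwards [hso.mem_nhds ht] with u hu
    rw [(hx u hu).deriv]

theorem pd_hat {n : ℕ} (a b c d e f : (Fin n → ℝ) → ℝ)
    (ha : ContDiff ℝ (⊤ : ℕ∞) a) (hb : ContDiff ℝ (⊤ : ℕ∞) b) (hc : ContDiff ℝ (⊤ : ℕ∞) c)
    (hd : ContDiff ℝ (⊤ : ℕ∞) d) (he : ContDiff ℝ (⊤ : ℕ∞) e) (hf : ContDiff ℝ (⊤ : ℕ∞) f)
    (p : Fin n → ℝ) (k : Fin n) :
    pd (fun q => a q * b q + (c q * d q + e q * f q) / 2) p k =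
      pd a p k * b p + a p * pd b p k + (pd c p k * d p + c p * pd d p k
        + (pd e p k * f p + e p * pd f p k)) / 2 := by
  have h : ∀ {f : (Fin n → ℝ) → ℝ}, ContDiff ℝ (⊤ : ℕ∞) f → HasFDerivAt f (fderiv ℝ f p) p :=
    fun hf => (hf.differentiable (by simp)).differentiableAt.hasFDerivAt
  have := ((h ha).mul (h hb)).add ((((h hc).mul (h hd)).add ((h he).mul (h hf))).mul_const (1/2))
  have e2 : (fun q => a q * b q + (c q * d q + e q * f q) / 2)
    = (a * b + fun q => (c * d + e * f) q * (1/2)) := by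
    ext q; simp only [Pi.add_apply, Pi.mul_apply]; ring
  unfold pd
  rw [e2, this.fderiv]
  simp only [add_apply, smul_apply, smul_eq_mul]
  ring

theorem sum2 {n : ℕ} (a b ξ : Fin n → ℝ) :
    ∑ i, ∑ j, a i * b j * ξ i * ξ j = (∑ i, a i * ξ i) * ∑ j, b j * ξ j := by
  rw [Finset.sum_mul_sum]
  exact Finset.sum_congr rfl fun j _ => Finset.sum_congr rfl fun k _ => by ring

theorem sum2' {n : ℕ} (a b ξ : Fin n → ℝ) :
    ∑ i, ∑ j, a j * b i * ξ i * ξ j = (∑ i, a i * ξ i) * ∑ j, b j * ξ j := by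
  rw [Finset.sum_comm, ← sum2]
  exact Finset.sum_congr rfl fun j _ => Finset.sum_congr rfl fun k _ => by ring

theorem num_hat {n : ℕ} (g ghat : Fin n → Fin n → (Fin n → ℝ) → ℝ) (ω β : Fin n → (Fin n → ℝ) → ℝ)
    (α : (Fin n → ℝ) → ℝ)
    (hrel : ∀ i j p, ghat i j p
      = α p * g i j p + (β i p * ω j p + β j p * ω i p) / 2) (p ξ : Fin n → ℝ) :
    Fnum ghat p ξ = α p * Fnum g p ξ + Fden β p ξ * Fden ω p ξ := by
  unfold Fnum Fden
  have h : ∀ i j, ghat i j p * ξ i * ξ j = α p * (g i j p * ξ i * ξ j)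
      + (1/2) * (β i p * ω j p * ξ i * ξ j) + (1/2) * (β j p * ω i p * ξ i * ξ j) := by
    intro i j; rw [hrel]; ring
  simp_rw [h, Finset.sum_add_distrib, ← Finset.mul_sum]
  rw [sum2 (fun i => β i p) (fun i => ω i p), sum2' (fun i => β i p) (fun i => ω i p)]
  ring

theorem Fxi_hat {n : ℕ} (g ghat : Fin n → Fin n → (Fin n → ℝ) → ℝ) (ω β : Fin n → (Fin n → ℝ) → ℝ)
    (α : (Fin n → ℝ) → ℝ)
    (hrel : ∀ i j p, ghat i j p
      = α p * g i j p + (β i p * ω j p + β j p * ω i p) / 2) (p ξ : Fin n → ℝ)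
    (hD : Fden ω p ξ ≠ 0) (k : Fin n) :
    Fxi ghat ω k p ξ = α p * Fxi g ω k p ξ + β k p := by
  have h : ∀ j, ghat k j p * ξ j = α p * (g k j p * ξ j) + (β k p / 2) * (ω j p * ξ j)
      + (ω k p / 2) * (β j p * ξ j) := by
    intro j; rw [hrel]; ring
  unfold Fxi
  rw [num_hat g ghat ω β α hrel]
  simp_rw [h, Finset.sum_add_distrib, ← Finset.mul_sum]
  rw [show (∑ j, ω j p * ξ j) = Fden ω p ξ from rfl, show (∑ j, β j p * ξ j) = Fden β p ξ from rfl]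
  field_simp
  ring

theorem Fx_hat {n : ℕ} (g ghat : Fin n → Fin n → (Fin n → ℝ) → ℝ) (ω β : Fin n → (Fin n → ℝ) → ℝ)
    (α : (Fin n → ℝ) → ℝ)
    (hgsm : ∀ i j, ContDiff ℝ (⊤ : ℕ∞) (g i j))
    (hωsm : ∀ i, ContDiff ℝ (⊤ : ℕ∞) (ω i)) (hβsm : ∀ i, ContDiff ℝ (⊤ : ℕ∞) (β i))
    (hαsm : ContDiff ℝ (⊤ : ℕ∞) α)
    (hrel : ∀ i j p, ghat i j p
      = α p * g i j p + (β i p * ω j p + β j p * ω i p) / 2) (p ξ : Fin n → ℝ)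
    (hD : Fden ω p ξ ≠ 0) (k : Fin n) :
    Fx ghat ω k p ξ = α p * Fx g ω k p ξ + pd α p k * ((Fden ω p ξ)⁻¹ * Fnum g p ξ)
      + ∑ l, pd (β l) p k * ξ l := by
  have h1 : ∀ i j, pd (ghat i j) p k * ξ i * ξ j =
      pd α p k * (g i j p * ξ i * ξ j) + α p * (pd (g i j) p k * ξ i * ξ j)
      + (1/2) * (pd (β i) p k * ω j p * ξ i * ξ j)
      + (1/2) * (β i p * pd (ω j) p k * ξ i * ξ j)
      + (1/2) * (pd (β j) p k * ω i p * ξ i * ξ j)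
      + (1/2) * (β j p * pd (ω i) p k * ξ i * ξ j) := by
    intro i j
    rw [show ghat i j = fun q => α q * g i j q + (β i q * ω j q + β j q * ω i q) / 2 from
      funext (hrel i j),
      pd_hat _ _ _ _ _ _ hαsm (hgsm i j) (hβsm i) (hωsm j) (hβsm j) (hωsm i)]
    ring
  unfold Fx
  rw [num_hat g ghat ω β α hrel]
  simp_rw [h1, Finset.sum_add_distrib, ← Finset.mul_sum]
  rw [sum2 (fun i => pd (β i) p k) (fun i => ω i p), sum2' (fun i => pd (β i) p k) (fun i => ω i p),
    sum2 (fun i => β i p) (fun i => pd (ω i) p k), sum2' (fun i => β i p) (fun i => pd (ω i) p k)]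
  rw [← Fden, ← Fden, ← Fnum]
  field_simp
  ring

theorem kStar {n : ℕ}
    (g ghat : Fin n → Fin n → (Fin n → ℝ) → ℝ) (ω β : Fin n → (Fin n → ℝ) → ℝ)
    (α : (Fin n → ℝ) → ℝ)
    (hs : ∀ i j, g i j = g j i)
    (hgsm : ∀ i j, ContDiff ℝ (⊤ : ℕ∞) (g i j))
    (hωsm : ∀ i, ContDiff ℝ (⊤ : ℕ∞) (ω i)) (hβsm : ∀ i, ContDiff ℝ (⊤ : ℕ∞) (β i))
    (hαsm : ContDiff ℝ (⊤ : ℕ∞) α)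
    (hrel : ∀ i j p, ghat i j p
      = α p * g i j p + (β i p * ω j p + β j p * ω i p) / 2)
    (hnd : ∀ (p v : Fin n → ℝ), (∑ l, ω l p * v l) = 0 →
      (∀ w : Fin n → ℝ, (∑ l, ω l p * w l) = 0 →
        (∑ i, ∑ j, g i j p * v i * w j) = 0) → v = 0)
    (hproj : ∀ (x : ℝ → Fin n → ℝ) (s : Set ℝ), IsOpen s → ContDiffOn ℝ (⊤ : ℕ∞) x s →
      (IsKropinaGeodesicOn g ω x s ↔ IsKropinaGeodesicOn ghat ω x s))
    (p ξ : Fin n → ℝ) (hD : Fden ω p ξ ≠ 0) (k : Fin n) :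
    kD α p ξ * Fxi g ω k p ξ + kD (β k) p ξ
      = pd α p k * ((Fden ω p ξ)⁻¹ * Fnum g p ξ) + ∑ l, pd (β l) p k * ξ l := by
  obtain ⟨x, s, hso, h0, hxs, hx0, hxd, hgeo⟩ := geo_ex g hs ω hgsm hωsm hnd p ξ hD
  have hgeo' := (hproj x s hso hxs).1 hgeo
  have e1 := (hgeo 0 h0).2 k
  have e2 := (hgeo' 0 h0).2 k
  have e3 := ((along α hαsm x ξ 0 hxd).mul e1).add (along (β k) (hβsm k) x ξ 0 hxd)
  have e4 := e3.congr_of_eventuallyEq (f₁ := fun u => Fxi ghat ω k (x u) (deriv x u)) (by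
    filter_upwards [hso.mem_nhds h0] with u hu
    exact Fxi_hat g ghat ω β α hrel _ _ (hgeo u hu).1 k)
  have e5 := e2.unique e4
  rw [hxd.deriv, hx0, Fx_hat g ghat ω β α hgsm hωsm hβsm hαsm hrel p ξ hD k] at e5
  linarith

/-- a polynomial identity for nonzero parameter extends to zero -/
theorem at_zero (f : ℝ → ℝ) (hf : Continuous f) (h : ∀ s, s ≠ 0 → f s = 0) : f 0 = 0 := by
  have h1 : Set.EqOn f 0 (closure {0}ᶜ) :=
    Set.EqOn.closure (fun s hs => h s hs) hf continuous_zero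
  exact h1 (by rw [(dense_compl_singleton (0:ℝ)).closure_eq]; trivial)

theorem abstract_alg {E : Type*} [AddCommGroup E] [Module ℝ E] (a o : E → ℝ) (G B : E → E → ℝ)
    (ha : ∀ v w (s : ℝ), a (v + s • w) = a v + s * a w)
    (ho : ∀ v w (s : ℝ), o (v + s • w) = o v + s * o w)
    (hG : ∀ x v w (s : ℝ), G x (v + s • w) = G x v + s * G x w)
    (hGs : ∀ x y, G x y = G y x)
    (hB : ∀ x v w (s : ℝ), B x (v + s • w) = B x v + s * B x w)
    (key : ∀ w ξ, o ξ ≠ 0 →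
      a ξ * (2 * o ξ * G w ξ - o w * G ξ ξ) + (o ξ) ^ 2 * B w ξ = a w * o ξ * G ξ ξ)
    (u v0 : E) (hu : o u = 1) (hv : o v0 = 0) (hv0 : G v0 v0 ≠ 0) :
    (∀ w, a w = 0) ∧ ∀ w ξ, B w ξ = 0 := by
  have hG2 : ∀ v (s : ℝ), G (v + s • u) (v + s • u)
      = G v v + 2 * s * G u v + s ^ 2 * G u u := by
    intro v s
    rw [hG, hGs (v + s • u) v, hG, hGs (v + s • u) u, hG, hGs v u]; ring
  have hov : ∀ v, o v = 0 → ∀ s : ℝ, o (v + s • u) = s := by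
    intro v hv s; rw [ho, hv, hu]; ring
  -- contraction with a kernel vector
  have h1 : ∀ w, o w = 0 → 2 * a v0 * G w v0 = a w * G v0 v0 := by
    intro w hw
    have := at_zero (fun s => 2 * (a v0 + s * a u) * (G w v0 + s * G w u)
      + s * (B w v0 + s * B w u) - a w * (G v0 v0 + 2 * s * G u v0 + s ^ 2 * G u u))
      (by fun_prop) (by
        intro s hs
        have k := key w (v0 + s • u) (by rw [hov _ hv]; exact hs)
        rw [hov _ hv, hw, hG2, hG, hB, ha] at k
        apply mul_left_cancel₀ hs
        linarith)
    linarith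
  have h2 : a v0 = 0 := by
    have := h1 v0 hv
    have h3 : a v0 * G v0 v0 = 0 := by linarith
    exact (mul_eq_zero.1 h3).resolve_right hv0
  have h3 : ∀ w, o w = 0 → a w = 0 := by
    intro w hw
    have := h1 w hw
    rw [h2] at this
    have h3 : a w * G v0 v0 = 0 := by linarith
    exact (mul_eq_zero.1 h3).resolve_right hv0
  have h4 : a u = 0 := by
    have := at_zero (fun s => a u * (2 * s * (G u v0 + s * G u u)
      - (G v0 v0 + 2 * s * G u v0 + s ^ 2 * G u u))
      + s * (B u v0 + s * B u u) - a u * (G v0 v0 + 2 * s * G u v0 + s ^ 2 * G u u))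
      (by fun_prop) (by
        intro s hs
        have k := key u (v0 + s • u) (by rw [hov _ hv]; exact hs)
        rw [hov _ hv, hu, hG2, hG, hB, ha, h2] at k
        apply mul_left_cancel₀ hs
        linarith)
    have h3 : a u * G v0 v0 = 0 := by linarith
    exact (mul_eq_zero.1 h3).resolve_right hv0
  have h5 : ∀ w, a w = 0 := by
    intro w
    have e := ha w u (-(o w))
    have e2 := h3 (w + (-(o w)) • u) (by rw [ho, hu]; ring)
    rw [e2, h4] at e
    linarith
  refine ⟨h5, ?_⟩
  have h6 : ∀ w ξ, o ξ ≠ 0 → B w ξ = 0 := by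
    intro w ξ hξ
    have k := key w ξ hξ
    rw [h5, h5] at k
    have : o ξ ^ 2 * B w ξ = 0 := by linarith
    exact (mul_eq_zero.1 this).resolve_left (pow_ne_zero 2 hξ)
  intro w ξ
  by_cases hξ : o ξ = 0
  · have e := hB w ξ u 1
    rw [h6 w u (by rw [hu]; norm_num), h6 w _ (by rw [hov _ hξ]; norm_num)] at e
    linarith
  · exact h6 w ξ hξ

theorem lin_add {n : ℕ} (c v w : Fin n → ℝ) (s : ℝ) :
    ∑ i, c i * (v + s • w) i = ∑ i, c i * v i + s * ∑ i, c i * w i := by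
  rw [Finset.mul_sum, ← Finset.sum_add_distrib]
  exact Finset.sum_congr rfl fun i _ => by simp; ring

theorem kBl_add {n : ℕ} (g : Fin n → Fin n → (Fin n → ℝ) → ℝ) (p x v w : Fin n → ℝ) (s : ℝ) :
    kBl g p x (v + s • w) = kBl g p x v + s * kBl g p x w := by
  simp only [kBl, Finset.mul_sum, ← Finset.sum_add_distrib]
  exact Finset.sum_congr rfl fun i _ => Finset.sum_congr rfl fun j _ => by simp; ring

/-- existence of a non-isotropic vector in the kernel -/
theorem noniso {n : ℕ} (g : Fin n → Fin n → (Fin n → ℝ) → ℝ) (hs : ∀ i j, g i j = g j i)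
    (ω : Fin n → (Fin n → ℝ) → ℝ)
    (hnd : ∀ (p v : Fin n → ℝ), (∑ l, ω l p * v l) = 0 →
      (∀ w : Fin n → ℝ, (∑ l, ω l p * w l) = 0 →
        (∑ i, ∑ j, g i j p * v i * w j) = 0) → v = 0)
    (p : Fin n → ℝ) (i j : Fin n) (hij : i ≠ j) (hi : ω i p ≠ 0) :
    ∃ v, Fden ω p v = 0 ∧ kBl g p v v ≠ 0 := by
  by_contra hcon
  push Not at hcon
  have hz : ∀ v w, Fden ω p v = 0 → Fden ω p w = 0 → kBl g p v w = 0 := by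
    intro v w hv hw
    have h1 := hcon (v + (1:ℝ) • w) (by
      have := lin_add (fun l => ω l p) v w 1
      unfold Fden at *
      rw [this, hv, hw]; ring)
    rw [kBl_add, kBl_symm g hs p (v + (1:ℝ) • w) v, kBl_add, kBl_symm g hs p (v + (1:ℝ) • w) w, kBl_add,
      hcon v hv, hcon w hw, kBl_symm g hs p w v] at h1
    linarith
  have h2 := hnd p (Pi.single j (ω i p) - Pi.single i (ω j p))
  have h3 : Fden ω p (Pi.single j (ω i p) - Pi.single i (ω j p)) = 0 := by
    simp [Fden, mul_sub, Finset.sum_sub_distrib, Pi.single_apply]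
    ring
  have h4 := h2 h3 fun w hw => hz _ w h3 hw
  have h5 := congrFun h4 j
  simp [hij.symm] at h5
  exact hi h5

/-- If `F = g/ω` and `F̂ = ĝ/ω` with `ĝ = αg + β·ω` are projectively equivalent
(have the same geodesics) and `ker ω` is non-integrable on a dense set
(`ω ∧ dω ≠ 0`), then `α` is constant and `β` is closed. -/
theorem stmt13 {n : ℕ}
    (g ghat : Fin n → Fin n → (Fin n → ℝ) → ℝ) (ω β : Fin n → (Fin n → ℝ) → ℝ)
    (α : (Fin n → ℝ) → ℝ)
    (hgsymm : ∀ i j, g i j = g j i) (hghatsymm : ∀ i j, ghat i j = ghat j i)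
    (hgsm : ∀ i j, ContDiff ℝ (⊤ : ℕ∞) (g i j)) (hghatsm : ∀ i j, ContDiff ℝ (⊤ : ℕ∞) (ghat i j))
    (hωsm : ∀ i, ContDiff ℝ (⊤ : ℕ∞) (ω i)) (hβsm : ∀ i, ContDiff ℝ (⊤ : ℕ∞) (β i))
    (hαsm : ContDiff ℝ (⊤ : ℕ∞) α)
    (hrel : ∀ i j p, ghat i j p
      = α p * g i j p + (β i p * ω j p + β j p * ω i p) / 2)
    (hnd : ∀ (p v : Fin n → ℝ), (∑ l, ω l p * v l) = 0 →
      (∀ w : Fin n → ℝ, (∑ l, ω l p * w l) = 0 →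
        (∑ i, ∑ j, g i j p * v i * w j) = 0) → v = 0)
    (hndhat : ∀ (p v : Fin n → ℝ), (∑ l, ω l p * v l) = 0 →
      (∀ w : Fin n → ℝ, (∑ l, ω l p * w l) = 0 →
        (∑ i, ∑ j, ghat i j p * v i * w j) = 0) → v = 0)
    (hdense : Dense {p : Fin n → ℝ | ∃ i j k,
      ω i p * (pd (ω k) p j - pd (ω j) p k)
        + ω j p * (pd (ω i) p k - pd (ω k) p i)
        + ω k p * (pd (ω j) p i - pd (ω i) p j) ≠ 0})
    (hproj : ∀ (x : ℝ → Fin n → ℝ) (s : Set ℝ), IsOpen s → ContDiffOn ℝ (⊤ : ℕ∞) x s →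
      (IsKropinaGeodesicOn g ω x s ↔ IsKropinaGeodesicOn ghat ω x s)) :
    (∀ p q : Fin n → ℝ, α p = α q) ∧
    (∀ (p : Fin n → ℝ) (i j : Fin n), pd (β j) p i = pd (β i) p j) := by
  have hpt : ∀ p, (∃ i j k,
      ω i p * (pd (ω k) p j - pd (ω j) p k)
        + ω j p * (pd (ω i) p k - pd (ω k) p i)
        + ω k p * (pd (ω j) p i - pd (ω i) p j) ≠ 0) →
      (∀ k, pd α p k = 0) ∧ ∀ i j, pd (β j) p i - pd (β i) p j = 0 := by
    rintro p ⟨i, j, k, hijk⟩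
    have hne : ∃ a b, a ≠ b ∧ ω a p ≠ 0 := by
      by_contra hcon
      push Not at hcon
      apply hijk
      by_cases hij : i = j
      · subst hij; ring
      by_cases hjk : j = k
      · subst hjk; ring
      rw [hcon i j hij, hcon j k hjk, hcon k j (Ne.symm hjk)]
      ring
    obtain ⟨a, b, hab, ha⟩ := hne
    obtain ⟨v0, hv, hv0⟩ := noniso g hgsymm ω hnd p a b hab ha
    have hlin : ∀ f v w (s : ℝ), kD f p (v + s • w) = kD f p v + s * kD f p w :=
      fun f v w s => lin_add _ v w s
    have res := abstract_alg (kD α p) (Fden ω p) (kBl g p)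
      (fun w ξ => ∑ k, w k * (kD (β k) p ξ - ∑ l, pd (β l) p k * ξ l))
      (hlin α) (fun v w s => lin_add _ v w s) (fun x v w s => kBl_add g p x v w s)
      (kBl_symm g hgsymm p)
      (by
        intro x v w s
        simp only [Finset.mul_sum, ← Finset.sum_add_distrib]
        refine Finset.sum_congr rfl fun k _ => ?_
        rw [hlin, lin_add]
        ring)
      (by
        intro w ξ hD
        have st := kStar g ghat ω β α hgsymm hgsm hωsm hβsm hαsm hrel hnd hproj p ξ hD
        have hF : ∑ k, w k * Fxi g ω k p ξ = 2 * (Fden ω p ξ)⁻¹ * kBl g p w ξ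
            - ((Fden ω p ξ)⁻¹) ^ 2 * Fden ω p w * Fnum g p ξ := by
          have h : ∀ k, w k * Fxi g ω k p ξ = (2 * (Fden ω p ξ)⁻¹) * (w k * kRow g p ξ k)
            - (((Fden ω p ξ)⁻¹) ^ 2 * Fnum g p ξ) * (ω k p * w k) := by
            intro k; unfold Fxi kRow; ring
          simp_rw [h, Finset.sum_sub_distrib, ← Finset.mul_sum, kBl_row]
          rw [← Fden]; ring
        have hsum : kD α p ξ * (∑ k, w k * Fxi g ω k p ξ)
            + ∑ k, w k * (kD (β k) p ξ - ∑ l, pd (β l) p k * ξ l)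
            = kD α p w * ((Fden ω p ξ)⁻¹ * Fnum g p ξ) := by
          rw [Finset.mul_sum, ← Finset.sum_add_distrib]
          rw [show kD α p w = ∑ m, pd α p m * w m from rfl, Finset.sum_mul]
          refine Finset.sum_congr rfl fun k _ => ?_
          have := st k
          linear_combination (w k) * this
        rw [hF] at hsum
        have hN : kBl g p ξ ξ = Fnum g p ξ := rfl
        rw [hN]
        field_simp at hsum
        linear_combination hsum)
      (Pi.single a (ω a p)⁻¹) v0
      (by simp [Fden, Pi.single_apply, ha]) hv hv0
    have hk : ∀ f k, kD f p (Pi.single k 1) = pd f p k := by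
      intro f k; simp [kD, Pi.single_apply]
    refine ⟨fun k => by rw [← hk]; exact res.1 _, fun i j => ?_⟩
    have := res.2 (Pi.single j 1) (Pi.single i 1)
    simpa [hk, Pi.single_apply] using this
  have hext : ∀ f : (Fin n → ℝ) → ℝ, Continuous f → (∀ p, (∃ i j k,
      ω i p * (pd (ω k) p j - pd (ω j) p k)
        + ω j p * (pd (ω i) p k - pd (ω k) p i)
        + ω k p * (pd (ω j) p i - pd (ω i) p j) ≠ 0) → f p = 0) → ∀ p, f p = 0 := by
    intro f hf h p
    have := Continuous.ext_on hdense hf (continuous_const (y := (0:ℝ))) h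
    exact congrFun this p
  have hα : ∀ k p, pd α p k = 0 := fun k =>
    hext _ (pd_sm α hαsm k).continuous fun p hp => (hpt p hp).1 k
  refine ⟨fun p q => ?_, fun p i j => ?_⟩
  · refine is_const_of_fderiv_eq_zero (𝕜 := ℝ) (hαsm.differentiable (by simp)) (fun x => ?_) p q
    ext v
    rw [pd_sum]
    simp [kD, hα]
  · exact sub_eq_zero.1 (hext (fun p => pd (β j) p i - pd (β i) p j)
      ((pd_sm _ (hβsm j) i).continuous.sub (pd_sm _ (hβsm i) j).continuous)
      (fun p hp => (hpt p hp).2 i j) p)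
end
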